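/- For every integer n ≥ 2 and every ε > 0, the random walk L on the unitary group U(n) given by applying an independent Haar-random element of U(2) to the span of a uniformly chosen pair of coordinate vectors satisfies τ_{D,2}(ε) ≤ ⌈n² ln(π√n / ε)⌉; that is, for every probability measure μ on U(n) and every integer t ≥ n² ln(π√n/ε), W_{D,2}(μL^t, H) ≤ ε, where H is the Haar probability measure on U(n). -/

import Mathlib

open MeasureTheory ENNReal Filter Topology Matrix

noncomputable section

/-- The (Borel) product measurable structure on matrices. -/
instance matrixMeasurableSpace {m n R : Type*} [MeasurableSpace R] :
    MeasurableSpace (Matrix m n R) :=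
  (inferInstance : MeasurableSpace (m → n → R))

/-- `η` is a coupling of `μ` and `ν`: its two marginals are `μ` and `ν`. -/
def IsCoupling {X : Type*} [MeasurableSpace X] (η : Measure (X × X)) (μ ν : Measure X) : Prop :=
  η.map Prod.fst = μ ∧ η.map Prod.snd = ν

/-- The `L^p` transportation cost (Wasserstein) distance associated with the distance
function `d`, with values in `ℝ≥0∞`:
`W_{d,p}(μ,ν) = inf { (∫ d(x,y)^p dη)^{1/p} : η a coupling of (μ,ν) }`. -/
def wassersteinE {X : Type*} [MeasurableSpace X] (d : X → X → ℝ≥0∞) (p : ℝ)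
    (μ ν : Measure X) : ℝ≥0∞ :=
  ⨅ (η : Measure (X × X)) (_ : IsCoupling η μ ν), (∫⁻ z, d z.1 z.2 ^ p ∂η) ^ (1 / p)

/-- The length of the curve `γ` over `[0,1]`, w.r.t. the distance function `d`:
the supremum, over all partitions `0 = t 0 ≤ t 1 ≤ ⋯ ≤ t k = 1` of `[0,1]`, of the sums of
the distances between consecutive points of the curve. -/
def pathLengthE {X : Type*} (d : X → X → ℝ≥0∞) (γ : ℝ → X) : ℝ≥0∞ :=
  ⨆ (k : ℕ) (t : Fin (k + 1) → ℝ) (_ : Monotone t) (_ : t 0 = 0) (_ : t (Fin.last k) = 1),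
    ∑ i : Fin k, d (γ (t i.castSucc)) (γ (t i.succ))

/-- The intrinsic (length) distance on the set `S` induced by the distance function `d`:
the infimum of `d`-lengths of continuous paths joining `a` to `b` inside `S`. -/
def intrinsicDistE {X : Type*} [TopologicalSpace X] (d : X → X → ℝ≥0∞) (S : Set X)
    (a b : X) : ℝ≥0∞ :=
  ⨅ (γ : ℝ → X) (_ : ContinuousOn γ (Set.Icc 0 1)) (_ : Set.MapsTo γ (Set.Icc 0 1) S)
    (_ : γ 0 = a) (_ : γ 1 = b), pathLengthE d γ

/-- `t` iterated steps of the Markov transition kernel `P`, started from the initial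
distribution `μ` (so `kernelIterate P t μ = μP^t`). -/
def kernelIterate {X : Type*} [MeasurableSpace X] (P : X → Measure X) :
    ℕ → Measure X → Measure X
  | 0, μ => μ
  | t + 1, μ => (kernelIterate P t μ).bind P

/-- A Haar probability measure for the multiplicative set `S`, viewed as a measure on the
ambient space: a probability measure carried by `S` that is invariant under left and right
translations by all elements of `S`. -/
def IsHaarLike {X : Type*} [MeasurableSpace X] [Mul X] (S : Set X) (μ : Measure X) : Prop :=
  IsProbabilityMeasure μ ∧ μ Sᶜ = 0 ∧
    ∀ a ∈ S, μ.map (fun x => a * x) = μ ∧ μ.map (fun x => x * a) = μ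

/-- The Haar probability measure of a compact matrix group `S` (such as `SO(n)` or `U(n)`),
viewed as a measure on the ambient matrix space.  For such `S` a translation-invariant
probability measure exists and is unique, so `haarLike S` is *the* Haar probability
measure of `S`. -/
def haarLike {X : Type*} [MeasurableSpace X] [Mul X] (S : Set X) : Measure X := by
  classical exact if h : ∃ μ, IsHaarLike S μ then h.choose else 0

/-- The set of pairs `1 ≤ i < j ≤ n` of indices. -/
def pairs (n : ℕ) : Finset (Fin n × Fin n) :=
  Finset.univ.filter fun p => p.1 < p.2

/-- The unitary group `U(n)`, as a subset of the `n × n` complex matrices. -/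
def UU (n : ℕ) : Set (Matrix (Fin n) (Fin n) ℂ) := {a | a * aᴴ = 1}

/-- The Hilbert–Schmidt distance `‖a - b‖_hs = √(Tr((a-b)*(a-b)))` between complex
matrices, as an `ℝ≥0∞`-valued distance function. -/
def hsDistC {n : ℕ} (a b : Matrix (Fin n) (Fin n) ℂ) : ℝ≥0∞ :=
  ENNReal.ofReal (Real.sqrt (Matrix.trace ((a - b)ᴴ * (a - b))).re)

/-- The intrinsic (length) metric `D` on `U(n)` induced by the Hilbert–Schmidt norm:
the infimum of `hs`-lengths of continuous paths inside `U(n)`. -/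
def DU (n : ℕ) (a b : Matrix (Fin n) (Fin n) ℂ) : ℝ≥0∞ :=
  intrinsicDistE hsDistC (UU n) a b

/-- The unitary matrix `u_{ij} ∈ U(n)` acting as `u ∈ U(2)` on `span{e_i, e_j}` (identifying
`e_i, e_j` with the standard basis of `ℂ²`) and as the identity on the orthogonal
complement. -/
def embed2 {n : ℕ} (i j : Fin n) (u : Matrix (Fin 2) (Fin 2) ℂ) :
    Matrix (Fin n) (Fin n) ℂ :=
  Matrix.of fun k l =>
    if k = i ∧ l = i then u 0 0
    else if k = i ∧ l = j then u 0 1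
    else if k = j ∧ l = i then u 1 0
    else if k = j ∧ l = j then u 1 1
    else if k = l then 1 else 0

/-- The transition kernel of the random walk on `U(n)`:
`L_x = (1/C(n,2)) ∑_{1≤i<j≤n} ∫_{U(2)} δ_{R_{ij}·x} dH₂(R)`, where `H₂` is the Haar
probability measure on `U(2)`. -/
def unitKernel (n : ℕ) (x : Matrix (Fin n) (Fin n) ℂ) : Measure (Matrix (Fin n) (Fin n) ℂ) :=
  (n.choose 2 : ℝ≥0∞)⁻¹ •
    ∑ p ∈ pairs n, (haarLike (UU 2)).map fun u => embed2 p.1 p.2 u * x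

section MatrixAlgebra
open scoped Matrix.Norms.Frobenius ComplexOrder

variable {ι κ : Type*} [Fintype ι] [Fintype κ]

lemma frobenius_norm_sq_eq_sum (a : Matrix ι κ ℂ) : ‖a‖ ^ 2 = ∑ i, ∑ j, ‖a i j‖ ^ 2 := by
  rw [Matrix.frobenius_norm_def, ← Real.sqrt_eq_rpow, Real.sq_sqrt]
  · norm_cast
  · positivity

lemma frobenius_norm_sq_eq_trace_mul_conjTranspose (a : Matrix ι κ ℂ) :
    ‖a‖ ^ 2 = (trace (a * aᴴ)).re := by
  rw [frobenius_norm_sq_eq_sum]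
  simp [trace, Matrix.mul_apply, Complex.mul_conj, Complex.normSq_eq_norm_sq]
  norm_cast

lemma frobenius_norm_sq_eq_trace_conjTranspose_mul (a : Matrix ι κ ℂ) :
    ‖a‖ ^ 2 = (trace (aᴴ * a)).re := by
  rw [frobenius_norm_sq_eq_trace_mul_conjTranspose, trace_mul_comm]

lemma re_trace_conjTranspose (a : Matrix ι ι ℂ) : (trace aᴴ).re = (trace a).re := by
  simp [trace_conjTranspose]

lemma hsDistC_eq_ofReal_norm {n : ℕ} (a b : Matrix (Fin n) (Fin n) ℂ) :
    hsDistC a b = ENNReal.ofReal ‖a - b‖ := by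
  rw [hsDistC, ← frobenius_norm_sq_eq_trace_conjTranspose_mul, Real.sqrt_sq (norm_nonneg _)]

lemma mem_UU_iff {n : ℕ} {a : Matrix (Fin n) (Fin n) ℂ} : a ∈ UU n ↔ a * aᴴ = 1 := Iff.rfl

lemma conjTranspose_mul_self_of_mem_UU {n : ℕ} {a : Matrix (Fin n) (Fin n) ℂ} (ha : a ∈ UU n) :
    aᴴ * a = 1 := mul_eq_one_comm.mp ha

lemma UU_eq_unitaryGroup (n : ℕ) : UU n = (Matrix.unitaryGroup (Fin n) ℂ : Set _) := by
  ext a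
  simp [UU, Matrix.mem_unitaryGroup_iff, star_eq_conjTranspose]

lemma one_mem_UU (n : ℕ) : (1 : Matrix (Fin n) (Fin n) ℂ) ∈ UU n := by simp [UU]

lemma mul_mem_UU {n : ℕ} {a b : Matrix (Fin n) (Fin n) ℂ} (ha : a ∈ UU n) (hb : b ∈ UU n) :
    a * b ∈ UU n := by
  rw [UU_eq_unitaryGroup] at *
  exact mul_mem ha hb

lemma conjTranspose_mem_UU {n : ℕ} {a : Matrix (Fin n) (Fin n) ℂ} (ha : a ∈ UU n) :
    aᴴ ∈ UU n := by
  rw [mem_UU_iff, conjTranspose_conjTranspose, conjTranspose_mul_self_of_mem_UU ha]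

lemma frobenius_norm_mul_left_of_mem_UU {n : ℕ} {a : Matrix (Fin n) (Fin n) ℂ} (ha : a ∈ UU n)
    (b : Matrix (Fin n) κ ℂ) : ‖a * b‖ = ‖b‖ := by
  rw [← sq_eq_sq₀ (norm_nonneg _) (norm_nonneg _),
    frobenius_norm_sq_eq_trace_conjTranspose_mul, frobenius_norm_sq_eq_trace_conjTranspose_mul,
    conjTranspose_mul, Matrix.mul_assoc, ← Matrix.mul_assoc aᴴ,
    conjTranspose_mul_self_of_mem_UU ha, Matrix.one_mul]

lemma frobenius_norm_mul_right_of_mem_UU {n : ℕ} {a : Matrix (Fin n) (Fin n) ℂ} (ha : a ∈ UU n)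
    (b : Matrix κ (Fin n) ℂ) : ‖b * a‖ = ‖b‖ := by
  rw [← frobenius_norm_conjTranspose (b * a), conjTranspose_mul,
    frobenius_norm_mul_left_of_mem_UU (conjTranspose_mem_UU ha), frobenius_norm_conjTranspose]

/-- The skew-Hermitian part of a square matrix. -/
def skewPart (a : Matrix ι ι ℂ) : Matrix ι ι ℂ := (2⁻¹ : ℂ) • (a - aᴴ)

lemma conjTranspose_skewPart {ι : Type*} (a : Matrix ι ι ℂ) : (skewPart a)ᴴ = -skewPart a := by
  simp [skewPart, conjTranspose_smul, ← smul_neg]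

lemma skewPart_conjTranspose_mul_mul {κ : Type*} (e : Matrix ι κ ℂ) (a : Matrix ι ι ℂ) :
    skewPart (eᴴ * a * e) = eᴴ * skewPart a * e := by
  simp [skewPart, conjTranspose_mul, Matrix.mul_sub, Matrix.sub_mul, Matrix.mul_assoc]

lemma norm_skewPart_le (a : Matrix ι ι ℂ) : ‖skewPart a‖ ≤ ‖a‖ := by
  rw [skewPart, norm_smul]
  have := norm_sub_le a aᴴ
  rw [frobenius_norm_conjTranspose] at this
  norm_num
  linarith

/-- The Cayley transform `(1 - k/2) (1 + k/2)⁻¹`. -/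
def cayley [DecidableEq ι] (k : Matrix ι ι ℂ) : Matrix ι ι ℂ :=
  (1 - (2⁻¹ : ℂ) • k) * (1 + (2⁻¹ : ℂ) • k)⁻¹

lemma re_trace_mul_nonneg_of_posSemidef {g N : Matrix ι ι ℂ} (hN : N.PosSemidef) :
    0 ≤ (trace (g * gᴴ * N)).re := by
  have h : (gᴴ * N * g).PosSemidef := hN.conjTranspose_mul_mul_same g
  have h2 := h.trace_nonneg
  rw [Matrix.mul_assoc, trace_mul_comm]
  exact (Complex.le_def.1 h2).1

variable [DecidableEq ι]

lemma isUnit_one_add_half_of_skew {k : Matrix ι ι ℂ} (hk : kᴴ = -k) :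
    IsUnit (1 + (2⁻¹ : ℂ) • k) := by
  have h1 : (1 + ((2⁻¹ : ℂ) • k) * ((2⁻¹ : ℂ) • k)ᴴ).PosDef :=
    Matrix.PosDef.one.add_posSemidef (posSemidef_self_mul_conjTranspose _)
  have h2 : (1 + (2⁻¹ : ℂ) • k) * (1 - (2⁻¹ : ℂ) • k) =
      1 + ((2⁻¹ : ℂ) • k) * ((2⁻¹ : ℂ) • k)ᴴ := by
    have : ((2⁻¹ : ℂ) • k)ᴴ = - ((2⁻¹ : ℂ) • k) := by simp [conjTranspose_smul, hk]
    rw [this]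
    generalize (2⁻¹ : ℂ) • k = h
    noncomm_ring
  rw [← h2] at h1
  exact (Matrix.isUnit_iff_isUnit_det _).2
    (isUnit_of_mul_isUnit_left (by simpa [det_mul] using h1.isUnit.map (Matrix.detMonoidHom)))

lemma cayley_mul_conjTranspose {k : Matrix ι ι ℂ} (hk : kᴴ = -k) :
    cayley k * (cayley k)ᴴ = 1 := by
  have hu := isUnit_one_add_half_of_skew hk
  set x := 1 + (2⁻¹ : ℂ) • k with hx
  have hxH : xᴴ = 1 - (2⁻¹ : ℂ) • k := by simp [hx, conjTranspose_smul, hk, sub_eq_add_neg]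
  have hcomm : x * xᴴ = xᴴ * x := by
    rw [hxH, hx]
    generalize (2⁻¹ : ℂ) • k = h
    noncomm_ring
  have hdet : IsUnit x.det := (Matrix.isUnit_iff_isUnit_det _).1 hu
  have hdet' : IsUnit xᴴ.det := by
    rw [det_conjTranspose]; exact hdet.star
  have hc : cayley k = xᴴ * x⁻¹ := by rw [cayley, hxH]
  rw [hc, conjTranspose_mul, conjTranspose_conjTranspose, conjTranspose_nonsing_inv]
  calc xᴴ * x⁻¹ * (xᴴ⁻¹ * x) = xᴴ * (x⁻¹ * xᴴ⁻¹) * x := by simp only [Matrix.mul_assoc]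
    _ = xᴴ * (xᴴ⁻¹ * x⁻¹) * x := by
      rw [← Matrix.mul_inv_rev, ← hcomm, Matrix.mul_inv_rev]
    _ = 1 := by
      rw [← Matrix.mul_assoc, Matrix.mul_nonsing_inv _ hdet', Matrix.one_mul,
        Matrix.nonsing_inv_mul _ hdet]

/-- Rotating by the Cayley transform of the skew-Hermitian part `k` of `1 - N + k` gains
at least `‖k‖² / (1 + ‖k‖² / 4)`. -/
lemma norm_sq_div_le_re_trace_cayley {k N : Matrix ι ι ℂ} (hk : kᴴ = -k) (hN : N.PosSemidef) :
    ‖k‖ ^ 2 / (1 + ‖k‖ ^ 2 / 4) ≤ 2 * (trace ((cayley k - 1) * (1 - N + k))).re := by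
  have hu := isUnit_one_add_half_of_skew hk
  set x := 1 + (2⁻¹ : ℂ) • k with hx
  have hdet : IsUnit x.det := (Matrix.isUnit_iff_isUnit_det _).1 hu
  set g := k * x⁻¹ with hg
  have hS : cayley k = 1 - g := by
    have : (1 - (2⁻¹ : ℂ) • k) = x - k := by
      rw [hx]
      have : k = (2⁻¹ : ℂ) • k + (2⁻¹ : ℂ) • k := by rw [← add_smul]; norm_num
      nth_rw 3 [this]
      abel
    rw [cayley, ← hx, this, Matrix.sub_mul, Matrix.mul_nonsing_inv _ hdet]
  have hgx : g * x = k := by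
    rw [hg, Matrix.mul_assoc, Matrix.nonsing_inv_mul _ hdet, Matrix.mul_one]
  have hgg : g + gᴴ = g * gᴴ := by
    have h := cayley_mul_conjTranspose hk
    rw [hS, conjTranspose_sub, conjTranspose_one] at h
    have h2 : (1 - g) * (1 - gᴴ) = 1 - (g + gᴴ) + g * gᴴ := by noncomm_ring
    rw [h2] at h
    have h3 : g * gᴴ - (g + gᴴ) = 0 := by
      have := sub_eq_zero.2 h
      rw [← this]; abel
    exact (sub_eq_zero.1 h3).symm
  have hgk : g * k = (2 : ℂ) • (k - g) := by
    have h : g + (2⁻¹ : ℂ) • (g * k) = k := by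
      simpa [hx, Matrix.mul_add] using hgx
    have : k - g = (2⁻¹ : ℂ) • (g * k) := by nth_rw 1 [← h]; abel
    rw [this, smul_smul]; norm_num
  have htk : (trace k).re = 0 := by
    have := re_trace_conjTranspose k
    rw [hk] at this
    simp at this
    linarith
  have htg : 2 * (trace g).re = ‖g‖ ^ 2 := by
    rw [frobenius_norm_sq_eq_trace_mul_conjTranspose, ← hgg, trace_add, Complex.add_re,
      re_trace_conjTranspose]
    ring
  have htN : 0 ≤ 2 * (trace (g * N)).re := by
    have h1 : (trace (g * N)).re = (trace (gᴴ * N)).re := by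
      rw [← re_trace_conjTranspose (g * N), conjTranspose_mul, hN.isHermitian.eq, trace_mul_comm]
    have h2 := re_trace_mul_nonneg_of_posSemidef (g := g) hN
    rw [← hgg, Matrix.add_mul, trace_add, Complex.add_re, ← h1] at h2
    linarith
  have htot : (trace ((cayley k - 1) * (1 - N + k))).re =
      (trace g).re + (trace (g * N)).re := by
    have : (cayley k - 1) * (1 - N + k) = -g + g * N - g * k := by rw [hS]; noncomm_ring
    rw [this, hgk]
    simp [trace_add, trace_sub, trace_neg, trace_smul, htk]
    ring
  have hnorm : ‖k‖ ^ 2 ≤ ‖g‖ ^ 2 * (1 + ‖k‖ ^ 2 / 4) := by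
    have h1 : ‖k‖ ^ 2 = ‖g‖ ^ 2 + ‖g * k‖ ^ 2 / 4 := by
      have hxx : x * xᴴ = 1 + (4⁻¹ : ℂ) • (k * kᴴ) := by
        simp [hx, conjTranspose_smul, hk, Matrix.mul_add, Matrix.add_mul, smul_smul]
        norm_num
        module
      nth_rw 1 [← hgx]
      rw [frobenius_norm_sq_eq_trace_mul_conjTranspose, conjTranspose_mul g x, Matrix.mul_assoc,
        ← Matrix.mul_assoc x, hxx, frobenius_norm_sq_eq_trace_mul_conjTranspose g,
        frobenius_norm_sq_eq_trace_mul_conjTranspose (g * k), conjTranspose_mul g k]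
      simp [Matrix.mul_add, Matrix.add_mul, Matrix.mul_assoc, trace_add, trace_smul]
      ring
    have h2 : ‖g * k‖ ^ 2 ≤ ‖g‖ ^ 2 * ‖k‖ ^ 2 := by
      rw [← mul_pow]; gcongr; exact frobenius_norm_mul g k
    nlinarith
  rw [htot, div_le_iff₀ (by positivity)]
  nlinarith [sq_nonneg ‖k‖]

end MatrixAlgebra

section Contraction
open scoped Matrix.Norms.Frobenius ComplexOrder

variable {n : ℕ}

/-- The isometry `ℂ² → ℂⁿ` sending the standard basis to `e_i, e_j`. -/
def pairInclusion (i j : Fin n) : Matrix (Fin n) (Fin 2) ℂ :=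
  Matrix.of fun k a => if k = ![i, j] a then 1 else 0

lemma pairInclusion_conjTranspose_mul_self {i j : Fin n} (h : i ≠ j) :
    (pairInclusion i j)ᴴ * pairInclusion i j = 1 := by
  have hstar : ∀ a k, (pairInclusion i j)ᴴ a k = if k = ![i, j] a then 1 else 0 := by
    intro a k
    by_cases hk : k = ![i, j] a <;> simp [pairInclusion, hk]
  ext a b
  simp only [Matrix.mul_apply, hstar, ite_mul, one_mul, zero_mul, Finset.sum_ite_eq',
    Finset.mem_univ, if_true]
  fin_cases a <;> fin_cases b <;> simp [pairInclusion, h, h.symm]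

lemma embed2_eq_one_add {i j : Fin n} (h : i ≠ j) (u : Matrix (Fin 2) (Fin 2) ℂ) :
    embed2 i j u = 1 + pairInclusion i j * (u - 1) * (pairInclusion i j)ᴴ := by
  ext k l
  by_cases hki : k = i <;> by_cases hkj : k = j <;> by_cases hli : l = i <;>
    by_cases hlj : l = j <;> subst_vars <;>
    simp_all [embed2, pairInclusion, Matrix.mul_apply, Fin.sum_univ_two, Matrix.one_apply, eq_comm]

lemma embed2_one {i j : Fin n} (h : i ≠ j) : embed2 i j (1 : Matrix (Fin 2) (Fin 2) ℂ) = 1 := by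
  simp [embed2_eq_one_add h]

lemma embed2_mul {i j : Fin n} (h : i ≠ j) (u v : Matrix (Fin 2) (Fin 2) ℂ) :
    embed2 i j (u * v) = embed2 i j u * embed2 i j v := by
  simp only [embed2_eq_one_add h]
  have hE := pairInclusion_conjTranspose_mul_self h
  set e := pairInclusion i j
  have h1 : e * (u - 1) * eᴴ * (e * (v - 1) * eᴴ) = e * ((u - 1) * (v - 1)) * eᴴ := by
    calc _ = e * (u - 1) * (eᴴ * e) * ((v - 1) * eᴴ) := by simp only [Matrix.mul_assoc]
      _ = _ := by rw [hE, Matrix.mul_one]; simp only [Matrix.mul_assoc]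
  have h2 : u * v - 1 = (u - 1) + (v - 1) + (u - 1) * (v - 1) := by noncomm_ring
  rw [h2, Matrix.mul_add, Matrix.mul_add, Matrix.add_mul, Matrix.add_mul, Matrix.mul_add,
    Matrix.add_mul, Matrix.mul_one, Matrix.add_mul 1, Matrix.one_mul, h1]
  simp only [Matrix.mul_one]
  abel

lemma embed2_conjTranspose {i j : Fin n} (h : i ≠ j) (u : Matrix (Fin 2) (Fin 2) ℂ) :
    embed2 i j uᴴ = (embed2 i j u)ᴴ := by
  simp [embed2_eq_one_add h, Matrix.mul_assoc]

lemma embed2_mem_UU {i j : Fin n} (h : i ≠ j) {u : Matrix (Fin 2) (Fin 2) ℂ} (hu : u ∈ UU 2) :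
    embed2 i j u ∈ UU n := by
  rw [mem_UU_iff, ← embed2_conjTranspose h, ← embed2_mul h, mem_UU_iff.1 hu, embed2_one h]

/-- The rotation in the plane of `e_i, e_j` used to bring `y` closer to `x`. -/
def rot (i j : Fin n) (x y : Matrix (Fin n) (Fin n) ℂ) : Matrix (Fin 2) (Fin 2) ℂ :=
  cayley (skewPart ((pairInclusion i j)ᴴ * (y * xᴴ) * pairInclusion i j))

lemma rot_mem_UU (i j : Fin n) (x y : Matrix (Fin n) (Fin n) ℂ) : rot i j x y ∈ UU 2 :=
  cayley_mul_conjTranspose (conjTranspose_skewPart _)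

lemma norm_sub_sq_of_mem_UU {x y : Matrix (Fin n) (Fin n) ℂ} (hx : x ∈ UU n) (hy : y ∈ UU n) :
    ‖x - y‖ ^ 2 = 2 * n - 2 * (trace (y * xᴴ)).re := by
  have h : (x - y) * (x - y)ᴴ = x * xᴴ + y * yᴴ - (y * xᴴ + (y * xᴴ)ᴴ) := by
    simp [conjTranspose_mul]; noncomm_ring
  rw [frobenius_norm_sq_eq_trace_mul_conjTranspose, h, mem_UU_iff.1 hx, mem_UU_iff.1 hy,
    trace_sub, trace_add, trace_add, Complex.sub_re, Complex.add_re, Complex.add_re,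
    re_trace_conjTranspose]
  simp
  ring

lemma norm_sq_block_eq (i j : Fin n) (a : Matrix (Fin n) (Fin n) ℂ) :
    ‖(pairInclusion i j)ᴴ * a * pairInclusion i j‖ ^ 2 =
      ‖a i i‖ ^ 2 + ‖a i j‖ ^ 2 + ‖a j i‖ ^ 2 + ‖a j j‖ ^ 2 := by
  rw [frobenius_norm_sq_eq_sum]
  simp [pairInclusion, Matrix.mul_apply, Fin.sum_univ_two, apply_ite (starRingEnd ℂ), add_assoc]

lemma norm_sq_block_le {i j : Fin n} (h : i ≠ j) (a : Matrix (Fin n) (Fin n) ℂ) :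
    ‖(pairInclusion i j)ᴴ * a * pairInclusion i j‖ ^ 2 ≤ ‖a‖ ^ 2 := by
  rw [norm_sq_block_eq, frobenius_norm_sq_eq_sum]
  calc _ = ∑ k ∈ {i, j}, ∑ l ∈ {i, j}, ‖a k l‖ ^ 2 := by simp [Finset.sum_pair h, add_assoc]
    _ ≤ ∑ k ∈ {i, j}, ∑ l, ‖a k l‖ ^ 2 := Finset.sum_le_sum fun k _ =>
      Finset.sum_le_univ_sum_of_nonneg fun l => by positivity
    _ ≤ _ := Finset.sum_le_univ_sum_of_nonneg fun l => by positivity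

lemma norm_sub_embed2_rot_sq_le {i j : Fin n} (h : i ≠ j) {x y : Matrix (Fin n) (Fin n) ℂ}
    (hx : x ∈ UU n) (hy : y ∈ UU n) :
    ‖x - embed2 i j (rot i j x y) * y‖ ^ 2 ≤ ‖x - y‖ ^ 2 -
      ‖(pairInclusion i j)ᴴ * skewPart (y * xᴴ) * pairInclusion i j‖ ^ 2 /
        (1 + ‖(pairInclusion i j)ᴴ * skewPart (y * xᴴ) * pairInclusion i j‖ ^ 2 / 4) := by
  have hS := rot_mem_UU i j x y
  have hE := pairInclusion_conjTranspose_mul_self h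
  have hW : y * xᴴ ∈ UU n := mul_mem_UU hy (conjTranspose_mem_UU hx)
  rw [norm_sub_sq_of_mem_UU hx (mul_mem_UU (embed2_mem_UU h hS) hy), norm_sub_sq_of_mem_UU hx hy,
    ← skewPart_conjTranspose_mul_mul, Matrix.mul_assoc (embed2 _ _ _)]
  unfold rot at *
  generalize y * xᴴ = w at *
  set e := pairInclusion i j
  set k := skewPart (eᴴ * w * e) with hk
  have hN : ((2⁻¹ : ℂ) • ((eᴴ * (1 - w)) * (eᴴ * (1 - w))ᴴ)).PosSemidef :=
    (posSemidef_self_mul_conjTranspose _).smul (by norm_num [Complex.le_def])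
  have hB : eᴴ * w * e = 1 - (2⁻¹ : ℂ) • ((eᴴ * (1 - w)) * (eᴴ * (1 - w))ᴴ) + k := by
    have h1 : (eᴴ * (1 - w)) * (eᴴ * (1 - w))ᴴ =
        (2 : ℂ) • (1 : Matrix (Fin 2) (Fin 2) ℂ) - eᴴ * w * e - (eᴴ * w * e)ᴴ := by
      have h2 : (1 - w) * (1 - w)ᴴ = (2 : ℂ) • (1 : Matrix (Fin n) (Fin n) ℂ) - w - wᴴ := by
        have h3 : (1 - w) * (1 - w)ᴴ = 1 + w * wᴴ - w - wᴴ := by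
          simp; noncomm_ring
        rw [h3, mem_UU_iff.1 hW, two_smul]
      rw [conjTranspose_mul, conjTranspose_conjTranspose, Matrix.mul_assoc, ← Matrix.mul_assoc (1 - w),
        h2]
      simp [Matrix.mul_sub, Matrix.sub_mul, hE, Matrix.mul_assoc]
    rw [h1, hk, skewPart]
    module
  have key := norm_sq_div_le_re_trace_cayley (conjTranspose_skewPart (eᴴ * w * e)) hN
  rw [← hk, ← hB] at key
  have htr : (trace (embed2 i j (cayley k) * w)).re =
      (trace w).re + (trace ((cayley k - 1) * (eᴴ * w * e))).re := by
    rw [embed2_eq_one_add h, Matrix.add_mul, Matrix.one_mul, trace_add, Complex.add_re,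
      Matrix.mul_assoc, Matrix.mul_assoc, trace_mul_comm]
    simp only [Matrix.mul_assoc, e]
  rw [htr]
  linarith

lemma sum_pairs_add_sum_pairs_swap (f : Fin n → Fin n → ℝ) :
    ∑ p ∈ pairs n, (f p.1 p.2 + f p.2 p.1) + ∑ i, f i i = ∑ i, ∑ j, f i j := by
  have h1 : ∑ p ∈ pairs n, f p.1 p.2 = ∑ i, ∑ j, if i < j then f i j else 0 := by
    rw [pairs, Finset.sum_filter, ← Finset.univ_product_univ, Finset.sum_product]
  have h2 : ∑ p ∈ pairs n, f p.2 p.1 = ∑ i, ∑ j, if j < i then f i j else 0 := by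
    rw [pairs, Finset.sum_filter, ← Finset.univ_product_univ, Finset.sum_product, Finset.sum_comm]
  have h3 : ∑ i, f i i = ∑ i, ∑ j, if i = j then f i j else 0 := by simp
  rw [Finset.sum_add_distrib, h1, h2, h3, ← Finset.sum_add_distrib, ← Finset.sum_add_distrib]
  refine Finset.sum_congr rfl fun i _ => ?_
  rw [← Finset.sum_add_distrib, ← Finset.sum_add_distrib]
  refine Finset.sum_congr rfl fun j _ => ?_
  rcases lt_trichotomy i j with h | h | h
  · simp [h, h.ne, h.le]
  · simp [h]
  · simp [h, h.ne', h.le]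

lemma card_pairs (n : ℕ) : (pairs n).card = n.choose 2 := by
  have h := sum_pairs_add_sum_pairs_swap (n := n) (fun _ _ => 1)
  simp at h
  have h2 : (n.choose 2 : ℝ) = n * (n - 1) / 2 := Nat.cast_choose_two ℝ n
  have : ((pairs n).card : ℝ) = n.choose 2 := by rw [h2]; linarith
  exact_mod_cast this

lemma norm_sq_le_sum_pairs_block (hn : 2 ≤ n) (a : Matrix (Fin n) (Fin n) ℂ) :
    ‖a‖ ^ 2 ≤ ∑ p ∈ pairs n, ‖(pairInclusion p.1 p.2)ᴴ * a * pairInclusion p.1 p.2‖ ^ 2 := by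
  have h0 : ∑ p ∈ pairs n, ‖(pairInclusion p.1 p.2)ᴴ * a * pairInclusion p.1 p.2‖ ^ 2 =
      ∑ p ∈ pairs n, (‖a p.1 p.2‖ ^ 2 + ‖a p.2 p.1‖ ^ 2) +
      ∑ p ∈ pairs n, (‖a p.1 p.1‖ ^ 2 + ‖a p.2 p.2‖ ^ 2) := by
    rw [← Finset.sum_add_distrib]
    refine Finset.sum_congr rfl fun p _ => ?_
    rw [norm_sq_block_eq]
    ring
  have h1 := sum_pairs_add_sum_pairs_swap (fun i j => ‖a i j‖ ^ 2)
  have h2 := sum_pairs_add_sum_pairs_swap (fun i _ => ‖a i i‖ ^ 2)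
  simp only [Finset.sum_const, Finset.card_univ, Fintype.card_fin, nsmul_eq_mul,
    ← Finset.mul_sum] at h2
  rw [h0, frobenius_norm_sq_eq_sum, ← h1]
  have h3 : 0 ≤ ∑ i, ‖a i i‖ ^ 2 := by positivity
  have hn' : (2 : ℝ) ≤ n := by exact_mod_cast hn
  nlinarith

lemma norm_sq_skewPart_ge {w : Matrix (Fin n) (Fin n) ℂ} (hw : w ∈ UU n) :
    ‖w - 1‖ ^ 2 * (1 - ‖w - 1‖ ^ 2 / 4) ≤ ‖skewPart w‖ ^ 2 := by
  set v := w - 1 with hv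
  have hw' : w = 1 + v := by rw [hv]; abel
  have hvv : v + vᴴ = -(v * vᴴ) := by
    have h := mem_UU_iff.1 hw
    rw [hw'] at h
    have h2 : (1 + v) * (1 + v)ᴴ = 1 + (v + vᴴ + v * vᴴ) := by simp; noncomm_ring
    rw [h2] at h
    exact eq_neg_of_add_eq_zero_left (by simpa using h)
  have hs : skewPart w = skewPart v := by rw [skewPart, skewPart, hw']; simp
  have h1 : ‖v‖ ^ 2 = ‖skewPart v‖ ^ 2 + ‖(2⁻¹ : ℂ) • (v + vᴴ)‖ ^ 2 := by
    simp only [frobenius_norm_sq_eq_sum]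
    have : ∀ i j, ‖skewPart v i j‖ ^ 2 + ‖((2⁻¹ : ℂ) • (v + vᴴ)) i j‖ ^ 2 =
        (‖v i j‖ ^ 2 + ‖v j i‖ ^ 2) / 2 := by
      intro i j
      have := parallelogram_law_with_norm ℝ (v i j) (star (v j i))
      simp only [skewPart, Matrix.smul_apply, Matrix.sub_apply, Matrix.add_apply,
        conjTranspose_apply, norm_smul, mul_pow]
      rw [norm_star] at this
      norm_num
      rw [← Complex.star_def]
      linarith
    have h5 : ∑ i, ∑ j, ‖v j i‖ ^ 2 = ∑ i, ∑ j, ‖v i j‖ ^ 2 := Finset.sum_comm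
    simp only [← Finset.sum_add_distrib, this, ← Finset.sum_div]
    simp only [Finset.sum_add_distrib, h5]
    ring
  have h2 : ‖(2⁻¹ : ℂ) • (v + vᴴ)‖ ≤ 2⁻¹ * ‖v‖ ^ 2 := by
    rw [hvv, norm_smul, norm_neg, norm_inv, Complex.norm_ofNat]
    gcongr
    have := frobenius_norm_mul v vᴴ
    rwa [frobenius_norm_conjTranspose, ← sq] at this
  have h3 : ‖(2⁻¹ : ℂ) • (v + vᴴ)‖ ^ 2 ≤ (2⁻¹ * ‖v‖ ^ 2) ^ 2 := by gcongr
  rw [hs]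
  nlinarith

lemma norm_mul_conjTranspose_sub_one {x y : Matrix (Fin n) (Fin n) ℂ} (hx : x ∈ UU n) :
    ‖y * xᴴ - 1‖ = ‖x - y‖ := by
  have : y * xᴴ - 1 = (y - x) * xᴴ := by rw [Matrix.sub_mul, mem_UU_iff.1 hx]
  rw [this, frobenius_norm_mul_right_of_mem_UU (conjTranspose_mem_UU hx), norm_sub_rev]

lemma lt_of_mem_pairs {p : Fin n × Fin n} (hp : p ∈ pairs n) : p.1 < p.2 := by
  simpa [pairs] using hp

lemma norm_sub_embed2_rot_le {i j : Fin n} (h : i ≠ j) {x y : Matrix (Fin n) (Fin n) ℂ}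
    (hx : x ∈ UU n) (hy : y ∈ UU n) :
    ‖x - embed2 i j (rot i j x y) * y‖ ^ 2 ≤ ‖x - y‖ ^ 2 := by
  refine (norm_sub_embed2_rot_sq_le h hx hy).trans (sub_le_self _ ?_)
  positivity

lemma sum_pairs_norm_sub_embed2_rot_le (hn : 2 ≤ n) {x y : Matrix (Fin n) (Fin n) ℂ}
    (hx : x ∈ UU n) (hy : y ∈ UU n) (hxy : ‖x - y‖ ^ 2 ≤ 2 / n) :
    ∑ p ∈ pairs n, ‖x - embed2 p.1 p.2 (rot p.1 p.2 x y) * y‖ ^ 2 ≤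
      (n.choose 2) * ((1 - 2 / n ^ 2) * ‖x - y‖ ^ 2) := by
  have hn' : (2 : ℝ) ≤ n := by exact_mod_cast hn
  set d := ‖x - y‖ ^ 2 with hd
  have hd0 : 0 ≤ d := by positivity
  set a := skewPart (y * xᴴ) with ha
  have hW : y * xᴴ ∈ UU n := mul_mem_UU hy (conjTranspose_mem_UU hx)
  have hblock : ∀ p ∈ pairs n, ‖(pairInclusion p.1 p.2)ᴴ * a * pairInclusion p.1 p.2‖ ^ 2 ≤ d := by
    intro p hp
    refine (norm_sq_block_le (lt_of_mem_pairs hp).ne a).trans ?_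
    have h1 : a = skewPart (y * xᴴ - 1) := by simp [ha, skewPart]
    rw [hd, ← norm_mul_conjTranspose_sub_one hx, h1]
    gcongr
    exact norm_skewPart_le _
  have hA := norm_sq_skewPart_ge hW
  rw [norm_mul_conjTranspose_sub_one hx, ← hd, ← ha] at hA
  have hsum := norm_sq_le_sum_pairs_block hn a
  have h1 : ∀ p ∈ pairs n, ‖x - embed2 p.1 p.2 (rot p.1 p.2 x y) * y‖ ^ 2 ≤
      d - ‖(pairInclusion p.1 p.2)ᴴ * a * pairInclusion p.1 p.2‖ ^ 2 / (1 + d / 4) := by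
    intro p hp
    refine (norm_sub_embed2_rot_sq_le (lt_of_mem_pairs hp).ne hx hy).trans ?_
    gcongr
    exact hblock p hp
  refine (Finset.sum_le_sum h1).trans ?_
  rw [Finset.sum_sub_distrib, ← Finset.sum_div, Finset.sum_const, card_pairs, nsmul_eq_mul]
  have h2 : d * (1 - d / 4) / (1 + d / 4) ≤
      (∑ p ∈ pairs n, ‖(pairInclusion p.1 p.2)ᴴ * a * pairInclusion p.1 p.2‖ ^ 2) / (1 + d / 4) := by
    gcongr
    exact hA.trans hsum
  have h3 : d * ((n - 1) / n) ≤ d * (1 - d / 4) / (1 + d / 4) := by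
    rw [mul_div_assoc]
    refine mul_le_mul_of_nonneg_left ?_ hd0
    rw [div_le_div_iff₀ (by linarith) (by linarith)]
    have : d * n ≤ 2 := by rwa [le_div_iff₀ (by linarith)] at hxy
    nlinarith
  rw [Nat.cast_choose_two]
  have h4 : (n : ℝ) * (n - 1) / 2 * ((1 - 2 / n ^ 2) * d) =
      n * (n - 1) / 2 * d - d * ((n - 1) / n) := by
    field_simp
  rw [h4]
  linarith

end Contraction

section Diagonalization
open scoped Matrix.Norms.L2Operator

lemma exists_isHermitian_exp_eq {n : ℕ} {w : Matrix (Fin n) (Fin n) ℂ} (hw : w ∈ UU n) :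
    ∃ a : Matrix (Fin n) (Fin n) ℂ, a.IsHermitian ∧ NormedSpace.exp (Complex.I • a) = w := by
  have hwu : w ∈ unitary (Matrix (Fin n) (Fin n) ℂ) := by rwa [UU_eq_unitaryGroup] at hw
  have hnormal : IsStarNormal w := ⟨by
    rw [Unitary.mem_iff] at hwu
    rw [commute_iff_eq, hwu.1, hwu.2]⟩
  refine ⟨cfc (Complex.ofReal ∘ Complex.arg : ℂ → ℂ) w, IsSelfAdjoint.cfc_arg w, ?_⟩
  have hfin := w.finite_spectrum
  have hcont : ContinuousOn (Complex.ofReal ∘ Complex.arg : ℂ → ℂ) (spectrum ℂ w) :=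
    hfin.continuousOn _
  rw [← CFC.exp_eq_normedSpace_exp (𝕜 := ℂ), ← cfc_comp_smul .., ← cfc_comp' ..]
  conv_rhs => rw [← cfc_id' ℂ w]
  refine cfc_congr fun y hy ↦ ?_
  have hy₁ : ‖y‖ = 1 := spectrum.norm_eq_one_of_unitary hwu hy
  have : Complex.I * y.arg = Complex.log y :=
    Complex.ext (by simp [Complex.log_re, hy₁]) (by simp [Complex.log_im])
  simpa [← Complex.exp_eq_exp_ℂ, this] using Complex.exp_log (by rintro rfl; simp at hy₁)

end Diagonalization

section Geodesics
open scoped Matrix.Norms.Frobenius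

variable {n : ℕ}

/-- The one-parameter family of unitary matrices with eigenbasis `v` and eigenphases `s θ`. -/
def phaseFlow (v : Matrix (Fin n) (Fin n) ℂ) (θ : Fin n → ℝ) (s : ℝ) : Matrix (Fin n) (Fin n) ℂ :=
  v * diagonal (fun i => Complex.exp (Complex.I * (s * θ i : ℝ))) * vᴴ

lemma exists_eq_phaseFlow_one {w : Matrix (Fin n) (Fin n) ℂ} (hw : w ∈ UU n) :
    ∃ v ∈ UU n, ∃ θ : Fin n → ℝ, (∀ i, |θ i| ≤ Real.pi) ∧ w = phaseFlow v θ 1 := by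
  obtain ⟨a, ha, rfl⟩ := exists_isHermitian_exp_eq hw
  have hv : (ha.eigenvectorUnitary : Matrix (Fin n) (Fin n) ℂ) ∈ UU n := by
    rw [UU_eq_unitaryGroup]; exact ha.eigenvectorUnitary.2
  refine ⟨ha.eigenvectorUnitary, hv,
    fun i => Complex.arg (Complex.exp (Complex.I * ha.eigenvalues i)),
    fun i => Complex.abs_arg_le_pi _, ?_⟩
  have hspec := ha.spectral_theorem
  rw [Unitary.conjStarAlgAut_apply] at hspec
  set v : Matrix (Fin n) (Fin n) ℂ := (ha.eigenvectorUnitary : Matrix (Fin n) (Fin n) ℂ) with hvdef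
  have hinv : v⁻¹ = vᴴ := Matrix.inv_eq_right_inv hv
  have hunit : IsUnit v := IsUnit.of_mul_eq_one _ hv
  have h1 : Complex.I • a = v * diagonal (fun i => Complex.I * ha.eigenvalues i) * v⁻¹ := by
    nth_rw 1 [hspec]
    rw [hinv, ← star_eq_conjTranspose, ← Matrix.smul_mul, ← Matrix.mul_smul, ← diagonal_smul]
    rfl
  rw [h1, Matrix.exp_conj _ _ hunit, Matrix.exp_diagonal, hinv, phaseFlow]
  congr 3
  ext i
  rw [Pi.coe_exp, ← Complex.exp_eq_exp_ℂ]
  have h2 : ‖Complex.exp (Complex.I * ha.eigenvalues i)‖ = 1 := Complex.norm_exp_I_mul_ofReal _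
  have h3 := Complex.norm_mul_exp_arg_mul_I (Complex.exp (Complex.I * ha.eigenvalues i))
  rw [h2] at h3
  rw [one_mul, mul_comm Complex.I ((Complex.arg _ : ℝ) : ℂ)]
  simpa using h3.symm

lemma phaseFlow_zero {v : Matrix (Fin n) (Fin n) ℂ} (hv : v ∈ UU n) (θ : Fin n → ℝ) :
    phaseFlow v θ 0 = 1 := by
  simp [phaseFlow, mem_UU_iff.1 hv]

lemma phaseFlow_mem_UU {v : Matrix (Fin n) (Fin n) ℂ} (hv : v ∈ UU n) (θ : Fin n → ℝ) (s : ℝ) :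
    phaseFlow v θ s ∈ UU n := by
  refine mul_mem_UU (mul_mem_UU hv ?_) (conjTranspose_mem_UU hv)
  rw [mem_UU_iff, diagonal_conjTranspose, diagonal_mul_diagonal, ← diagonal_one]
  congr 1
  ext i
  simp only [Pi.star_apply, Complex.star_def, Complex.mul_conj, Complex.normSq_eq_norm_sq,
    Complex.norm_exp_I_mul_ofReal]
  simp

lemma norm_sq_phaseFlow_sub {v : Matrix (Fin n) (Fin n) ℂ} (hv : v ∈ UU n) (θ : Fin n → ℝ)
    (s t : ℝ) : ‖phaseFlow v θ s - phaseFlow v θ t‖ ^ 2 =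
      ∑ i, ‖Complex.exp (Complex.I * ((s - t) * θ i : ℝ)) - 1‖ ^ 2 := by
  rw [phaseFlow, phaseFlow, ← Matrix.sub_mul, ← Matrix.mul_sub,
    frobenius_norm_mul_right_of_mem_UU (conjTranspose_mem_UU hv),
    frobenius_norm_mul_left_of_mem_UU hv, diagonal_sub, frobenius_norm_sq_eq_sum]
  refine Finset.sum_congr rfl fun i _ => ?_
  rw [Finset.sum_eq_single i (fun j _ hj => by simp [diagonal_apply_ne _ hj.symm]) (by simp),
    diagonal_apply_eq]
  have : Complex.exp (Complex.I * (s * θ i : ℝ)) - Complex.exp (Complex.I * (t * θ i : ℝ)) =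
      Complex.exp (Complex.I * (t * θ i : ℝ)) *
        (Complex.exp (Complex.I * ((s - t) * θ i : ℝ)) - 1) := by
    rw [mul_sub, ← Complex.exp_add, mul_one]
    congr 2
    push_cast
    ring
  rw [this, norm_mul, Complex.norm_exp_I_mul_ofReal, one_mul]

lemma norm_sq_phaseFlow_sub_le {v : Matrix (Fin n) (Fin n) ℂ} (hv : v ∈ UU n) (θ : Fin n → ℝ)
    (s t : ℝ) : ‖phaseFlow v θ s - phaseFlow v θ t‖ ^ 2 ≤ (s - t) ^ 2 * ∑ i, θ i ^ 2 := by
  rw [norm_sq_phaseFlow_sub hv, Finset.mul_sum]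
  refine Finset.sum_le_sum fun i _ => ?_
  calc _ ≤ ‖(s - t) * θ i‖ ^ 2 := by gcongr; exact Real.norm_exp_I_mul_ofReal_sub_one_le
    _ = _ := by rw [Real.norm_eq_abs, sq_abs]; ring

lemma one_sub_sq_mul_abs_le_norm_exp_sub_one {θ : ℝ} (hθ : |θ| ≤ Real.pi) :
    (1 - ‖Complex.exp (Complex.I * θ) - 1‖ ^ 2 / 4) * |θ| ≤ ‖Complex.exp (Complex.I * θ) - 1‖ := by
  rw [Complex.norm_exp_I_mul_ofReal_sub_one, Real.norm_eq_abs]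
  have habs : |2 * Real.sin (θ / 2)| = 2 * Real.sin (|θ| / 2) := by
    have hnn : 0 ≤ Real.sin (|θ| / 2) :=
      Real.sin_nonneg_of_nonneg_of_le_pi (by positivity) (by linarith [abs_nonneg θ])
    rcases abs_cases θ with ⟨h, _⟩ | ⟨h, _⟩
    · rw [h] at hnn ⊢; rw [abs_of_nonneg (by positivity)]
    · rw [h] at hnn ⊢
      rw [neg_div, Real.sin_neg] at *
      rw [abs_of_nonpos (by linarith)]; ring
  rw [habs]
  set y := |θ| / 2 with hy
  have hy0 : 0 ≤ y := by positivity
  have hθy : |θ| = 2 * y := by rw [hy]; ring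
  have hcos : 0 ≤ Real.cos y := Real.cos_nonneg_of_neg_pi_div_two_le_of_le (by linarith) (by linarith)
  have hsc := Real.sin_sq_add_cos_sq y
  have hmain : y * Real.cos y ≤ Real.sin y := by
    rcases eq_or_lt_of_le hcos with h | h
    · rw [← h, mul_zero]
      exact Real.sin_nonneg_of_nonneg_of_le_pi hy0 (by linarith [Real.pi_pos])
    · have hlt : y < Real.pi / 2 := by
        refine lt_of_le_of_ne (by linarith) fun h' => ?_
        rw [h', Real.cos_pi_div_two] at h
        exact lt_irrefl _ h
      have := Real.le_tan hy0 hlt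
      rwa [Real.tan_eq_sin_div_cos, le_div_iff₀ h] at this
  have h2 : y * Real.cos y ^ 2 ≤ y * Real.cos y := by
    nlinarith [Real.cos_le_one y, mul_nonneg hy0 hcos]
  rw [hθy]
  have h3 : (1 - (2 * Real.sin y) ^ 2 / 4) * (2 * y) = 2 * (y * Real.cos y ^ 2) := by
    rw [show Real.cos y ^ 2 = 1 - Real.sin y ^ 2 by linarith]; ring
  rw [h3]
  linarith

/-- `x` and `y` are joined inside `U(n)` by a `1`-Lipschitz curve parametrized by `[0, l]`. -/
def JoinedByLength (x y : Matrix (Fin n) (Fin n) ℂ) (l : ℝ) : Prop :=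
  ∃ γ : ℝ → Matrix (Fin n) (Fin n) ℂ, (∀ s, γ s ∈ UU n) ∧ γ 0 = x ∧ γ l = y ∧
    ∀ s t, ‖γ s - γ t‖ ≤ |s - t|

lemma JoinedByLength.refl {x : Matrix (Fin n) (Fin n) ℂ} (hx : x ∈ UU n) :
    JoinedByLength x x 0 :=
  ⟨fun _ => x, fun _ => hx, rfl, rfl, fun s t => by simp⟩

lemma JoinedByLength.trans {x y z : Matrix (Fin n) (Fin n) ℂ} {l l' : ℝ} (hl' : 0 ≤ l')
    (h : JoinedByLength x y l) (hl : 0 ≤ l) (h' : JoinedByLength y z l') :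
    JoinedByLength x z (l + l') := by
  obtain ⟨γ, hU, h0, h1, hL⟩ := h
  obtain ⟨γ', hU', h0', h1', hL'⟩ := h'
  have key : ∀ s t, s ≤ l → l < t → ‖γ s - γ' (t - l)‖ ≤ |s - t| := by
    intro s t hs ht
    have e1 := hL s l
    have e2 := hL' 0 (t - l)
    rw [h1] at e1
    rw [h0'] at e2
    rw [abs_of_nonpos (by linarith)] at e1 e2 ⊢
    have := norm_sub_le_norm_sub_add_norm_sub (γ s) y (γ' (t - l))
    linarith
  refine ⟨fun s => if s ≤ l then γ s else γ' (s - l), fun s => ?_, by simp [hl, h0], ?_, ?_⟩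
  · dsimp only
    split_ifs
    exacts [hU s, hU' _]
  · dsimp only
    split_ifs with h
    · have : l' = 0 := by linarith
      subst this
      rw [add_zero, h1, ← h1', h0']
    · simpa using h1'
  · intro s t
    dsimp only
    split_ifs with hs ht ht
    · exact hL s t
    · exact key s t hs (not_le.1 ht)
    · rw [norm_sub_rev, abs_sub_comm]; exact key t s ht (not_le.1 hs)
    · simpa using hL' (s - l) (t - l)

lemma DU_le_of_joinedByLength {x y : Matrix (Fin n) (Fin n) ℂ} {l : ℝ} (hl : 0 ≤ l)
    (h : JoinedByLength x y l) : DU n x y ≤ ENNReal.ofReal l := by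
  obtain ⟨γ, hU, h0, h1, hL⟩ := h
  have hcont : Continuous γ :=
    (LipschitzWith.of_dist_le_mul (K := 1) fun s t => by
      simpa [dist_eq_norm, Real.dist_eq] using hL s t).continuous
  rw [DU, intrinsicDistE]
  refine iInf₂_le_of_le (fun s => γ (l * s)) ?_ <| iInf₂_le_of_le (fun s _ => hU _) (by simpa) <|
    iInf_le_of_le (by simpa) ?_
  · exact (hcont.comp (continuous_const.mul continuous_id)).continuousOn
  rw [pathLengthE]
  refine iSup_le fun k => iSup_le fun t => iSup_le fun ht => iSup_le fun ht0 => iSup_le fun ht1 => ?_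
  calc ∑ i : Fin k, hsDistC (γ (l * t i.castSucc)) (γ (l * t i.succ))
      ≤ ∑ i : Fin k, ENNReal.ofReal (l * (t i.succ - t i.castSucc)) := by
        refine Finset.sum_le_sum fun i _ => ?_
        rw [hsDistC_eq_ofReal_norm]
        refine ENNReal.ofReal_le_ofReal ((hL _ _).trans (le_of_eq ?_))
        have := ht (Fin.castSucc_lt_succ (i := i)).le
        rw [abs_sub_comm, ← mul_sub, abs_of_nonneg (mul_nonneg hl (sub_nonneg.2 this))]
    _ = ENNReal.ofReal (∑ i : Fin k, l * (t i.succ - t i.castSucc)) :=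
        (ENNReal.ofReal_sum_of_nonneg fun i _ =>
          mul_nonneg hl (sub_nonneg.2 (ht (Fin.castSucc_lt_succ (i := i)).le))).symm
    _ ≤ ENNReal.ofReal l := by
        refine ENNReal.ofReal_le_ofReal (le_of_eq ?_)
        rw [← Finset.mul_sum, Finset.sum_sub_distrib]
        have e1 := Fin.sum_univ_succ t
        have e2 := Fin.sum_univ_castSucc t
        have : ∑ i : Fin k, t i.succ - ∑ i : Fin k, t i.castSucc = 1 := by
          rw [ht0] at e1; rw [ht1] at e2; linarith
        rw [this, mul_one]

lemma exists_phaseFlow_mul_eq {x y : Matrix (Fin n) (Fin n) ℂ} (hx : x ∈ UU n) (hy : y ∈ UU n) :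
    ∃ v ∈ UU n, ∃ θ : Fin n → ℝ, (∀ i, |θ i| ≤ Real.pi) ∧ phaseFlow v θ 1 * x = y := by
  obtain ⟨v, hv, θ, hθ, h⟩ := exists_eq_phaseFlow_one (mul_mem_UU hy (conjTranspose_mem_UU hx))
  exact ⟨v, hv, θ, hθ, by
    rw [← h, Matrix.mul_assoc, conjTranspose_mul_self_of_mem_UU hx, Matrix.mul_one]⟩

lemma exists_joinedByLength {x y : Matrix (Fin n) (Fin n) ℂ} (hx : x ∈ UU n) (hy : y ∈ UU n)
    {c : ℝ} (hc : c ≤ 4) (hxy : ‖x - y‖ ^ 2 ≤ c) :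
    ∃ l, 0 ≤ l ∧ JoinedByLength x y l ∧ l * (1 - c / 4) ≤ ‖x - y‖ := by
  obtain ⟨v, hv, θ, hθ, h⟩ := exists_phaseFlow_mul_eq hx hy
  have hnorm : ‖x - y‖ ^ 2 = ∑ i, ‖Complex.exp (Complex.I * (θ i : ℝ)) - 1‖ ^ 2 := by
    have := norm_sq_phaseFlow_sub hv θ 1 0
    simp only [sub_zero, one_mul] at this
    rw [← this, phaseFlow_zero hv, norm_sub_rev, ← h,
      ← frobenius_norm_mul_right_of_mem_UU hx (phaseFlow v θ 1 - 1),
      Matrix.sub_mul, Matrix.one_mul]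
  set l := Real.sqrt (∑ i, θ i ^ 2) with hl
  have hl2 : l ^ 2 = ∑ i, θ i ^ 2 := Real.sq_sqrt (by positivity)
  have hlip : ∀ s t, ‖phaseFlow v θ s - phaseFlow v θ t‖ ≤ |s - t| * l := by
    intro s t
    refine abs_le_of_sq_le_sq' ?_ (by positivity) |>.2
    rw [mul_pow, sq_abs, hl2]
    exact norm_sq_phaseFlow_sub_le hv θ s t
  refine ⟨l, Real.sqrt_nonneg _, ⟨fun s => phaseFlow v θ (s / l) * x,
    fun s => mul_mem_UU (phaseFlow_mem_UU hv θ _) hx, by simp [phaseFlow_zero hv], ?_, ?_⟩, ?_⟩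
  · rcases eq_or_ne l 0 with h0 | h0
    · have := hlip 1 0
      rw [h0, mul_zero, norm_le_zero_iff, sub_eq_zero] at this
      dsimp only
      rw [← h, this, h0, _root_.div_zero]
    · dsimp only
      rw [div_self h0, h]
  · intro s t
    rw [← Matrix.sub_mul, frobenius_norm_mul_right_of_mem_UU hx]
    refine (hlip _ _).trans ?_
    rcases eq_or_ne l 0 with h0 | h0
    · rw [h0, mul_zero]; positivity
    · rw [← sub_div, abs_div, abs_of_nonneg (Real.sqrt_nonneg _), div_mul_cancel₀ _ h0]
  · refine abs_le_of_sq_le_sq' ?_ (norm_nonneg _) |>.2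
    rw [mul_pow, hl2, hnorm, Finset.sum_mul]
    refine Finset.sum_le_sum fun i _ => ?_
    have hi : ‖Complex.exp (Complex.I * (θ i : ℝ)) - 1‖ ^ 2 ≤ c := by
      refine le_trans ?_ (hnorm ▸ hxy)
      exact Finset.single_le_sum (f := fun i => ‖Complex.exp (Complex.I * (θ i : ℝ)) - 1‖ ^ 2)
        (fun i _ => by positivity) (Finset.mem_univ i)
    have h1 := one_sub_sq_mul_abs_le_norm_exp_sub_one (hθ i)
    have h2 : (1 - c / 4) * |θ i| ≤ ‖Complex.exp (Complex.I * (θ i : ℝ)) - 1‖ := by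
      refine le_trans ?_ h1
      gcongr
    rw [← sq_abs (θ i), mul_comm, ← mul_pow]
    have : 0 ≤ 1 - c / 4 := by linarith
    gcongr

lemma exists_subdivision {x y : Matrix (Fin n) (Fin n) ℂ} (hx : x ∈ UU n) (hy : y ∈ UU n)
    {m : ℕ} (hm : 0 < m) :
    ∃ z : ℕ → Matrix (Fin n) (Fin n) ℂ, (∀ k, z k ∈ UU n) ∧ z 0 = x ∧ z m = y ∧
      ∀ k, ‖z k - z (k + 1)‖ ^ 2 ≤ n * Real.pi ^ 2 / m ^ 2 := by
  obtain ⟨v, hv, θ, hθ, h⟩ := exists_phaseFlow_mul_eq hx hy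
  have hm' : (m : ℝ) ≠ 0 := by positivity
  refine ⟨fun k => phaseFlow v θ (k / m) * x, fun k => mul_mem_UU (phaseFlow_mem_UU hv θ _) hx,
    by simp [phaseFlow_zero hv], by simp [div_self hm', h], fun k => ?_⟩
  rw [← Matrix.sub_mul, frobenius_norm_mul_right_of_mem_UU hx]
  refine (norm_sq_phaseFlow_sub_le hv θ _ _).trans ?_
  have h1 : ((k : ℝ) / m - ((k + 1 : ℕ) : ℝ) / m) ^ 2 = 1 / m ^ 2 := by
    push_cast; field_simp; ring
  have h2 : ∑ i, θ i ^ 2 ≤ n * Real.pi ^ 2 := by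
    calc ∑ i, θ i ^ 2 ≤ ∑ _i : Fin n, Real.pi ^ 2 :=
          Finset.sum_le_sum fun i _ => sq_le_sq' (abs_le.1 (hθ i)).1 (abs_le.1 (hθ i)).2
      _ = _ := by simp
  rw [h1, div_mul_eq_mul_div, one_mul]
  gcongr

lemma exists_joinedByLength_chain {z : ℕ → Matrix (Fin n) (Fin n) ℂ} (hz : ∀ k, z k ∈ UU n)
    {c : ℝ} (hc : c ≤ 4) (m : ℕ) (hd : ∀ k < m, ‖z k - z (k + 1)‖ ^ 2 ≤ c) :
    ∃ l, 0 ≤ l ∧ JoinedByLength (z 0) (z m) l ∧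
      l * (1 - c / 4) ≤ ∑ k ∈ Finset.range m, ‖z k - z (k + 1)‖ := by
  induction m with
  | zero => exact ⟨0, le_rfl, .refl (hz 0), by simp⟩
  | succ m ih =>
    obtain ⟨l, hl, hj, hle⟩ := ih fun k hk => hd k (by omega)
    obtain ⟨l', hl', hj', hle'⟩ := exists_joinedByLength (hz m) (hz (m + 1)) hc (hd m (by omega))
    refine ⟨l + l', by positivity, hj.trans hl' hl hj', ?_⟩
    rw [Finset.sum_range_succ]
    linarith

lemma DU_sq_le_chain {z : ℕ → Matrix (Fin n) (Fin n) ℂ} (hz : ∀ k, z k ∈ UU n)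
    {c : ℝ} (hc : c < 4) (m : ℕ) (hd : ∀ k < m, ‖z k - z (k + 1)‖ ^ 2 ≤ c) :
    DU n (z 0) (z m) ^ (2 : ℝ) ≤ ENNReal.ofReal (m / (1 - c / 4) ^ 2) *
      ENNReal.ofReal (∑ k ∈ Finset.range m, ‖z k - z (k + 1)‖ ^ 2) := by
  obtain ⟨l, hl, hj, hle⟩ := exists_joinedByLength_chain hz hc.le m hd
  have hpos : 0 < 1 - c / 4 := by linarith
  calc DU n (z 0) (z m) ^ (2 : ℝ) ≤ ENNReal.ofReal l ^ (2 : ℝ) := by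
        gcongr
        exact DU_le_of_joinedByLength hl hj
    _ = ENNReal.ofReal (l ^ 2) := by
        rw [ENNReal.ofReal_rpow_of_nonneg hl (by norm_num)]
        norm_num
    _ ≤ _ := by
        rw [← ENNReal.ofReal_mul (by positivity)]
        refine ENNReal.ofReal_le_ofReal ?_
        rw [div_mul_eq_mul_div, le_div_iff₀ (by positivity), ← mul_pow]
        calc _ ≤ (∑ k ∈ Finset.range m, ‖z k - z (k + 1)‖) ^ 2 := by gcongr
          _ ≤ _ := by
            have := sq_sum_le_card_mul_sum_sq (s := Finset.range m)
              (f := fun k => ‖z k - z (k + 1)‖)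
            simpa using this

end Geodesics

section HaarExistence

instance matrixBorelSpace {m n R : Type*} [Countable m] [Countable n] [TopologicalSpace R]
    [MeasurableSpace R] [SecondCountableTopology R] [BorelSpace R] :
    BorelSpace (Matrix m n R) :=
  (inferInstance : BorelSpace (m → n → R))

instance matrixSecondCountableTopology {m n R : Type*} [Countable m] [Countable n]
    [TopologicalSpace R] [SecondCountableTopology R] :
    SecondCountableTopology (Matrix m n R) :=
  (inferInstance : SecondCountableTopology (m → n → R))

variable {n : ℕ}

lemma isClosed_UU (n : ℕ) : IsClosed (UU n) :=
  isClosed_eq (continuous_id.mul continuous_id.matrix_conjTranspose) continuous_const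

lemma measurableSet_UU (n : ℕ) : MeasurableSet (UU n) :=
  (isClosed_UU n).measurableSet

lemma isCompact_UU (n : ℕ) : IsCompact (UU n) := by
  have hbox : IsCompact (Set.univ.pi fun _ : Fin n => Set.univ.pi fun _ : Fin n =>
      Metric.closedBall (0 : ℂ) 1) :=
    isCompact_univ_pi fun _ => isCompact_univ_pi fun _ => isCompact_closedBall 0 1
  refine hbox.of_isClosed_subset (isClosed_UU n) fun a ha i _ j _ => ?_
  rw [UU_eq_unitaryGroup] at ha
  simpa using entry_norm_bound_of_unitary ha i j

instance unitaryGroupCompactSpace : CompactSpace (unitaryGroup (Fin n) ℂ) :=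
  isCompact_iff_compactSpace.mp (UU_eq_unitaryGroup n ▸ isCompact_UU n)

instance unitaryGroupMeasurableSpace : MeasurableSpace (unitaryGroup (Fin n) ℂ) :=
  (inferInstance : MeasurableSpace (Subtype _))

instance unitaryGroupBorelSpace : BorelSpace (unitaryGroup (Fin n) ℂ) :=
  Subtype.borelSpace _

lemma exists_isHaarLike_UU (n : ℕ) : ∃ μ, IsHaarLike (UU n) μ := by
  let ν : Measure (unitaryGroup (Fin n) ℂ) := Measure.haarMeasure ⊤
  have hν : IsProbabilityMeasure ν := ⟨by
    simpa using Measure.haarMeasure_self (K₀ := (⊤ : TopologicalSpace.PositiveCompacts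
      (unitaryGroup (Fin n) ℂ)))⟩
  have hval : Measurable (Subtype.val : unitaryGroup (Fin n) ℂ → Matrix (Fin n) (Fin n) ℂ) :=
    measurable_subtype_coe
  refine ⟨ν.map Subtype.val, Measure.isProbabilityMeasure_map hval.aemeasurable, ?_, ?_⟩
  · rw [Measure.map_apply hval (measurableSet_UU n).compl, UU_eq_unitaryGroup]
    convert measure_empty (μ := ν)
    ext x
    simp
  · intro a ha
    rw [UU_eq_unitaryGroup] at ha
    have hl : Measurable fun x : Matrix (Fin n) (Fin n) ℂ => a * x :=
      (continuous_const.mul continuous_id).measurable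
    have hr : Measurable fun x : Matrix (Fin n) (Fin n) ℂ => x * a :=
      (continuous_id.mul continuous_const).measurable
    rw [Measure.map_map hl hval, Measure.map_map hr hval]
    let g : unitaryGroup (Fin n) ℂ := ⟨a, ha⟩
    have hgl : Measurable fun x : unitaryGroup (Fin n) ℂ => g * x :=
      (continuous_const.mul continuous_id).measurable
    have hgr : Measurable fun x : unitaryGroup (Fin n) ℂ => x * g :=
      (continuous_id.mul continuous_const).measurable
    constructor
    · conv_rhs => rw [← map_mul_left_eq_self ν g, Measure.map_map hval hgl]
      rfl
    · have : IsProbabilityMeasure (ν.map (· * g)) :=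
        Measure.isProbabilityMeasure_map hgr.aemeasurable
      have key : ν.map (· * g) = ν := Measure.isHaarMeasure_eq_of_isProbabilityMeasure _ _
      conv_rhs => rw [← key, Measure.map_map hval hgr]
      rfl

lemma isHaarLike_haarLike (n : ℕ) : IsHaarLike (UU n) (haarLike (UU n)) := by
  unfold haarLike
  rw [dif_pos (exists_isHaarLike_UU n)]
  exact (exists_isHaarLike_UU n).choose_spec

instance isProbabilityMeasure_haarLike (n : ℕ) : IsProbabilityMeasure (haarLike (UU n)) :=
  (isHaarLike_haarLike n).1

lemma ae_haarLike_mem_UU (n : ℕ) : ∀ᵐ u ∂haarLike (UU n), u ∈ UU n :=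
  (isHaarLike_haarLike n).2.1

end HaarExistence

section RandomStep

variable {n : ℕ} {X : Type*} [MeasurableSpace X]

/-- The law of `F p x u` for a uniform pair `p`, a Haar-distributed `u ∈ U(2)` and an
independent `x` of law `η`. -/
def randomStep {Y : Type*} [MeasurableSpace Y] (n : ℕ)
    (F : Fin n × Fin n → X → Matrix (Fin 2) (Fin 2) ℂ → Y) (η : Measure X) : Measure Y :=
  (n.choose 2 : ℝ≥0∞)⁻¹ •
    ∑ p ∈ pairs n, (η.prod (haarLike (UU 2))).map fun q => F p q.1 q.2

lemma choose_two_ne_zero (hn : 2 ≤ n) : (n.choose 2 : ℝ≥0∞) ≠ 0 := by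
  exact_mod_cast (Nat.choose_pos hn).ne'

lemma average_pairs_const (hn : 2 ≤ n) (ν : Measure X) :
    (n.choose 2 : ℝ≥0∞)⁻¹ • ∑ _p ∈ pairs n, ν = ν := by
  rw [Finset.sum_const, card_pairs, ← Nat.cast_smul_eq_nsmul ℝ≥0∞, smul_smul,
    ENNReal.inv_mul_cancel (choose_two_ne_zero hn) (by simp), one_smul]

lemma isProbabilityMeasure_randomStep {Y : Type*} [MeasurableSpace Y] (hn : 2 ≤ n)
    {F : Fin n × Fin n → X → Matrix (Fin 2) (Fin 2) ℂ → Y}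
    (hF : ∀ p, Measurable fun q : X × Matrix (Fin 2) (Fin 2) ℂ => F p q.1 q.2)
    (η : Measure X) [IsProbabilityMeasure η] : IsProbabilityMeasure (randomStep n F η) := by
  refine ⟨?_⟩
  have h : ∀ p ∈ pairs n,
      ((η.prod (haarLike (UU 2))).map fun q => F p q.1 q.2) Set.univ = 1 := fun p _ => by
    rw [Measure.map_apply (hF p) .univ, Set.preimage_univ, measure_univ]
  rw [randomStep, Measure.smul_apply, Measure.finsetSum_apply, Finset.sum_congr rfl h,
    Finset.sum_const, card_pairs, nsmul_one, smul_eq_mul,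
    ENNReal.inv_mul_cancel (choose_two_ne_zero hn) (by simp)]

lemma map_randomStep {Y Z : Type*} [MeasurableSpace Y] [MeasurableSpace Z]
    {F : Fin n × Fin n → X → Matrix (Fin 2) (Fin 2) ℂ → Y}
    (hF : ∀ p, Measurable fun q : X × Matrix (Fin 2) (Fin 2) ℂ => F p q.1 q.2)
    {g : Y → Z} (hg : Measurable g) (η : Measure X) :
    (randomStep n F η).map g = randomStep n (fun p x u => g (F p x u)) η := by
  ext s hs
  simp only [randomStep, Measure.map_apply hg hs, Measure.smul_apply, Measure.finsetSum_apply]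
  congr 1
  refine Finset.sum_congr rfl fun p _ => ?_
  rw [← Measure.map_apply hg hs, Measure.map_map hg (hF p)]
  rfl

lemma lintegral_randomStep {Y : Type*} [MeasurableSpace Y]
    {F : Fin n × Fin n → X → Matrix (Fin 2) (Fin 2) ℂ → Y}
    (hF : ∀ p, Measurable fun q : X × Matrix (Fin 2) (Fin 2) ℂ => F p q.1 q.2)
    {f : Y → ℝ≥0∞} (hf : Measurable f) (η : Measure X) :
    ∫⁻ y, f y ∂(randomStep n F η) =
      (n.choose 2 : ℝ≥0∞)⁻¹ *
        ∫⁻ q, ∑ p ∈ pairs n, f (F p q.1 q.2) ∂(η.prod (haarLike (UU 2))) := by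
  rw [randomStep, lintegral_smul_measure, lintegral_finsetSum_measure, smul_eq_mul,
    lintegral_finsetSum _ fun p _ => by exact hf.comp (hF p)]
  congr 1
  exact Finset.sum_congr rfl fun p _ => lintegral_map hf (hF p)

lemma ae_randomStep {Y : Type*} [MeasurableSpace Y]
    {F : Fin n × Fin n → X → Matrix (Fin 2) (Fin 2) ℂ → Y}
    (hF : ∀ p, Measurable fun q : X × Matrix (Fin 2) (Fin 2) ℂ => F p q.1 q.2)
    {η : Measure X} {P : Y → Prop} (hP : MeasurableSet {y | P y})
    (h : ∀ p ∈ pairs n, ∀ᵐ q ∂(η.prod (haarLike (UU 2))), P (F p q.1 q.2)) :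
    ∀ᵐ y ∂(randomStep n F η), P y := by
  refine Measure.ae_smul_measure ?_ _
  rw [ae_iff, Measure.finsetSum_apply]
  refine Finset.sum_eq_zero fun p hp => ?_
  rw [← ae_iff, ae_map_iff (hF p).aemeasurable hP]
  exact h p hp

lemma continuous_embed2 (i j : Fin n) : Continuous (embed2 i j) := by
  refine continuous_matrix fun k l => ?_
  simp only [embed2, Matrix.of_apply]
  split_ifs <;> fun_prop

lemma measurable_embed2_mul (p : Fin n × Fin n) :
    Measurable fun q : Matrix (Fin n) (Fin n) ℂ × Matrix (Fin 2) (Fin 2) ℂ =>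
      embed2 p.1 p.2 q.2 * q.1 :=
  (((continuous_embed2 _ _).comp continuous_snd).mul continuous_fst).measurable

lemma map_embed2_mul_apply (p : Fin n × Fin n) (x : Matrix (Fin n) (Fin n) ℂ)
    {s : Set (Matrix (Fin n) (Fin n) ℂ)} (hs : MeasurableSet s) :
    (haarLike (UU 2)).map (fun u => embed2 p.1 p.2 u * x) s =
      haarLike (UU 2) (Prod.mk x ⁻¹' ((fun q : Matrix (Fin n) (Fin n) ℂ ×
        Matrix (Fin 2) (Fin 2) ℂ => embed2 p.1 p.2 q.2 * q.1) ⁻¹' s)) := by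
  have h : Measurable fun u => embed2 p.1 p.2 u * x :=
    ((continuous_embed2 _ _).mul continuous_const).measurable
  rw [Measure.map_apply h hs]
  rfl

lemma measurable_unitKernel (n : ℕ) : Measurable (unitKernel n) := by
  refine Measure.measurable_of_measurable_coe _ fun s hs => ?_
  simp only [unitKernel, Measure.smul_apply, Measure.finsetSum_apply, smul_eq_mul]
  refine (Finset.measurable_sum _ fun p _ => ?_).const_mul _
  simp only [map_embed2_mul_apply p _ hs]
  exact measurable_measure_prodMk_left (measurable_embed2_mul p hs)

lemma bind_unitKernel (ν : Measure (Matrix (Fin n) (Fin n) ℂ)) [SFinite ν] :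
    ν.bind (unitKernel n) = randomStep n (fun p x u => embed2 p.1 p.2 u * x) ν := by
  ext s hs
  rw [Measure.bind_apply hs (measurable_unitKernel n).aemeasurable]
  simp only [unitKernel, randomStep, Measure.smul_apply, Measure.finsetSum_apply, smul_eq_mul]
  have hm : ∀ p : Fin n × Fin n, Measurable fun x => haarLike (UU 2) (Prod.mk x ⁻¹' ((fun q :
      Matrix (Fin n) (Fin n) ℂ × Matrix (Fin 2) (Fin 2) ℂ =>
        embed2 p.1 p.2 q.2 * q.1) ⁻¹' s)) := fun p =>
    measurable_measure_prodMk_left (measurable_embed2_mul p hs)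
  simp only [map_embed2_mul_apply _ _ hs]
  rw [lintegral_const_mul _ (Finset.measurable_sum _ fun p _ => hm p),
    lintegral_finsetSum _ fun p _ => hm p]
  congr 1
  refine Finset.sum_congr rfl fun p _ => ?_
  rw [Measure.map_apply (measurable_embed2_mul p) hs,
    Measure.prod_apply (measurable_embed2_mul p hs)]

lemma map_embed2_mul_haarLike {p : Fin n × Fin n} (hp : p ∈ pairs n) :
    ((haarLike (UU n)).prod (haarLike (UU 2))).map (fun q => embed2 p.1 p.2 q.2 * q.1) =
      haarLike (UU n) := by
  have hae : ∀ᵐ u ∂haarLike (UU 2),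
      (haarLike (UU n)).map (fun x => embed2 p.1 p.2 u * x) = haarLike (UU n) := by
    filter_upwards [ae_haarLike_mem_UU 2] with u hu
    exact ((isHaarLike_haarLike n).2.2 _ (embed2_mem_UU (lt_of_mem_pairs hp).ne hu)).1
  ext s hs
  rw [Measure.map_apply (measurable_embed2_mul p) hs,
    Measure.prod_apply_symm (measurable_embed2_mul p hs)]
  have h : ∀ᵐ u ∂haarLike (UU 2), haarLike (UU n) ((fun x => (x, u)) ⁻¹'
      ((fun q : Matrix (Fin n) (Fin n) ℂ × Matrix (Fin 2) (Fin 2) ℂ =>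
        embed2 p.1 p.2 q.2 * q.1) ⁻¹' s)) = haarLike (UU n) s := by
    filter_upwards [hae] with u hu
    have hm : Measurable fun x : Matrix (Fin n) (Fin n) ℂ => embed2 p.1 p.2 u * x :=
      (continuous_const.mul continuous_id).measurable
    conv_rhs => rw [← hu, Measure.map_apply hm hs]
    rfl
  rw [lintegral_congr_ae h, lintegral_const, measure_univ, mul_one]

lemma haarLike_bind_unitKernel (hn : 2 ≤ n) :
    (haarLike (UU n)).bind (unitKernel n) = haarLike (UU n) := by
  rw [bind_unitKernel, randomStep, Finset.sum_congr rfl fun p hp => map_embed2_mul_haarLike hp]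
  exact average_pairs_const hn _

lemma kernelIterate_haarLike (hn : 2 ≤ n) (t : ℕ) :
    kernelIterate (unitKernel n) t (haarLike (UU n)) = haarLike (UU n) := by
  induction t with
  | zero => rfl
  | succ t ih => rw [kernelIterate, ih, haarLike_bind_unitKernel hn]

lemma randomStep_embed2_mul {g : Fin n × Fin n → X → Matrix (Fin 2) (Fin 2) ℂ}
    (hg : ∀ p, Measurable (g p)) (hgU : ∀ p x, g p x ∈ UU 2)
    {π : X → Matrix (Fin n) (Fin n) ℂ} (hπ : Measurable π) (η : Measure X)
    [IsProbabilityMeasure η] :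
    randomStep n (fun p x u => embed2 p.1 p.2 (u * g p x) * π x) η =
      (η.map π).bind (unitKernel n) := by
  have : IsProbabilityMeasure (η.map π) := Measure.isProbabilityMeasure_map hπ.aemeasurable
  rw [bind_unitKernel, randomStep, randomStep]
  congr 1
  refine Finset.sum_congr rfl fun p _ => ?_
  have hm : Measurable fun q : X × Matrix (Fin 2) (Fin 2) ℂ => q.2 * g p q.1 :=
    (continuous_fst.mul continuous_snd).measurable.comp
      (measurable_snd.prodMk ((hg p).comp measurable_fst))
  have h : MeasurePreserving (fun q : X × Matrix (Fin 2) (Fin 2) ℂ => (π q.1, q.2 * g p q.1))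
      (η.prod (haarLike (UU 2))) ((η.map π).prod (haarLike (UU 2))) :=
    MeasurePreserving.skew_product (g := fun x u => u * g p x)
      (hπ.measurePreserving η) hm
      (ae_of_all _ fun x => ((isHaarLike_haarLike 2).2.2 _ (hgU p x)).2)
  rw [← h.map_eq, Measure.map_map (measurable_embed2_mul p) h.measurable]
  rfl

end RandomStep

section CoupledChain

variable {n : ℕ}

lemma measurable_matrix_inv {m : ℕ} :
    Measurable fun a : Matrix (Fin m) (Fin m) ℂ => a⁻¹ := by
  have h : Measurable fun a : Matrix (Fin m) (Fin m) ℂ => (a.det⁻¹, a.adjugate) :=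
    (continuous_id.matrix_det.measurable.inv).prodMk continuous_id.matrix_adjugate.measurable
  have h2 : (fun a : Matrix (Fin m) (Fin m) ℂ => a⁻¹) =
      (fun q : ℂ × Matrix (Fin m) (Fin m) ℂ => q.1 • q.2) ∘ fun a => (a.det⁻¹, a.adjugate) := by
    funext a
    simp [Matrix.inv_def, Ring.inverse_eq_inv']
  rw [h2]
  exact (continuous_fst.smul continuous_snd).measurable.comp h

lemma measurable_cayley {m : ℕ} : Measurable (cayley : Matrix (Fin m) (Fin m) ℂ → _) := by
  have h1 : Measurable fun k : Matrix (Fin m) (Fin m) ℂ => 1 - (2⁻¹ : ℂ) • k :=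
    Continuous.measurable (by fun_prop)
  have h2 : Measurable fun k : Matrix (Fin m) (Fin m) ℂ => 1 + (2⁻¹ : ℂ) • k :=
    Continuous.measurable (by fun_prop)
  exact (continuous_fst.mul continuous_snd).measurable.comp
    (h1.prodMk (measurable_matrix_inv.comp h2))

lemma continuous_skewPart {m : ℕ} : Continuous (skewPart : Matrix (Fin m) (Fin m) ℂ → _) := by
  unfold skewPart
  fun_prop

lemma measurable_rot (i j : Fin n) :
    Measurable fun q : Matrix (Fin n) (Fin n) ℂ × Matrix (Fin n) (Fin n) ℂ => rot i j q.1 q.2 := by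
  refine measurable_cayley.comp (continuous_skewPart.comp ?_).measurable
  exact (continuous_const.matrix_mul (continuous_snd.mul
    continuous_fst.matrix_conjTranspose)).matrix_mul continuous_const

/-- The accumulated rotation aligning the `k`-th walker of the chain `z` with the first one. -/
def alignment (p : Fin n × Fin n) (z : ℕ → Matrix (Fin n) (Fin n) ℂ) :
    ℕ → Matrix (Fin 2) (Fin 2) ℂ
  | 0 => 1
  | k + 1 => alignment p z k * rot p.1 p.2 (z k) (z (k + 1))

/-- One coupled step of a chain of walkers, driven by the rotation `u` of the first walker. -/
def chainStep (p : Fin n × Fin n) (z : ℕ → Matrix (Fin n) (Fin n) ℂ)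
    (u : Matrix (Fin 2) (Fin 2) ℂ) (k : ℕ) : Matrix (Fin n) (Fin n) ℂ :=
  embed2 p.1 p.2 (u * alignment p z k) * z k

lemma alignment_mem_UU (p : Fin n × Fin n) (z : ℕ → Matrix (Fin n) (Fin n) ℂ) (k : ℕ) :
    alignment p z k ∈ UU 2 := by
  induction k with
  | zero => exact one_mem_UU 2
  | succ k ih => exact mul_mem_UU ih (rot_mem_UU _ _ _ _)

lemma measurable_alignment (p : Fin n × Fin n) (k : ℕ) :
    Measurable fun z : ℕ → Matrix (Fin n) (Fin n) ℂ => alignment p z k := by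
  induction k with
  | zero => exact measurable_const
  | succ k ih =>
    exact (continuous_fst.mul continuous_snd).measurable.comp (ih.prodMk
      ((measurable_rot p.1 p.2).comp ((measurable_pi_apply k).prodMk (measurable_pi_apply (k + 1)))))

lemma measurable_embed2_mul_of_measurable {X : Type*} [MeasurableSpace X] (p : Fin n × Fin n)
    {f : X → Matrix (Fin n) (Fin n) ℂ} {u : X → Matrix (Fin 2) (Fin 2) ℂ} (hf : Measurable f)
    (hu : Measurable u) : Measurable fun x => embed2 p.1 p.2 (u x) * f x := by
  have h := (measurable_embed2_mul p).comp (hf.prodMk hu)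
  exact h

lemma measurable_embed2_mul_apply (p : Fin n × Fin n) (k : ℕ)
    {v : (ℕ → Matrix (Fin n) (Fin n) ℂ) → Matrix (Fin 2) (Fin 2) ℂ} (hv : Measurable v) :
    Measurable fun q : (ℕ → Matrix (Fin n) (Fin n) ℂ) × Matrix (Fin 2) (Fin 2) ℂ =>
      embed2 p.1 p.2 (q.2 * v q.1) * q.1 k := by
  have hu : Measurable fun q : (ℕ → Matrix (Fin n) (Fin n) ℂ) × Matrix (Fin 2) (Fin 2) ℂ =>
      q.2 * v q.1 :=
    (continuous_fst.mul continuous_snd).measurable.comp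
      (measurable_snd.prodMk (hv.comp measurable_fst))
  have hz : Measurable fun q : (ℕ → Matrix (Fin n) (Fin n) ℂ) × Matrix (Fin 2) (Fin 2) ℂ =>
      q.1 k := (measurable_pi_apply k).comp measurable_fst
  exact measurable_embed2_mul_of_measurable p hz hu

lemma measurable_chainStep (p : Fin n × Fin n) :
    Measurable fun q : (ℕ → Matrix (Fin n) (Fin n) ℂ) × Matrix (Fin 2) (Fin 2) ℂ =>
      chainStep p q.1 q.2 := by
  refine measurable_pi_iff.mpr fun k => ?_
  simp only [chainStep]
  exact measurable_embed2_mul_apply p k (v := fun z => alignment p z k) (measurable_alignment p k)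

lemma chainStep_mem_UU {p : Fin n × Fin n} (hp : p ∈ pairs n)
    {z : ℕ → Matrix (Fin n) (Fin n) ℂ} (hz : ∀ k, z k ∈ UU n)
    {u : Matrix (Fin 2) (Fin 2) ℂ} (hu : u ∈ UU 2) (k : ℕ) : chainStep p z u k ∈ UU n :=
  mul_mem_UU (embed2_mem_UU (lt_of_mem_pairs hp).ne (mul_mem_UU hu (alignment_mem_UU p z k)))
    (hz k)

open scoped Matrix.Norms.Frobenius

lemma norm_chainStep_sub {p : Fin n × Fin n} (hp : p ∈ pairs n)
    (z : ℕ → Matrix (Fin n) (Fin n) ℂ) {u : Matrix (Fin 2) (Fin 2) ℂ} (hu : u ∈ UU 2) (k : ℕ) :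
    ‖chainStep p z u k - chainStep p z u (k + 1)‖ =
      ‖z k - embed2 p.1 p.2 (rot p.1 p.2 (z k) (z (k + 1))) * z (k + 1)‖ := by
  have hne := (lt_of_mem_pairs hp).ne
  rw [chainStep, chainStep, alignment, ← Matrix.mul_assoc u, embed2_mul hne (u * alignment p z k),
    Matrix.mul_assoc (embed2 p.1 p.2 (u * alignment p z k)),
    ← Matrix.mul_sub, frobenius_norm_mul_left_of_mem_UU
      (embed2_mem_UU hne (mul_mem_UU hu (alignment_mem_UU p z k)))]

/-- The sum of the squared Hilbert–Schmidt lengths of the first `m` links of the chain `z`. -/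
def chainEnergy (m : ℕ) (z : ℕ → Matrix (Fin n) (Fin n) ℂ) : ℝ :=
  ∑ k ∈ Finset.range m, ‖z k - z (k + 1)‖ ^ 2

/-- A chain of unitary matrices whose first `m` links have squared length at most `c`. -/
def IsFineChain (m : ℕ) (c : ℝ) (z : ℕ → Matrix (Fin n) (Fin n) ℂ) : Prop :=
  (∀ k, z k ∈ UU n) ∧ ∀ k < m, ‖z k - z (k + 1)‖ ^ 2 ≤ c

lemma chainEnergy_nonneg (m : ℕ) (z : ℕ → Matrix (Fin n) (Fin n) ℂ) : 0 ≤ chainEnergy m z :=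
  Finset.sum_nonneg fun _ _ => sq_nonneg _

lemma measurable_norm_sub_sq (k l : ℕ) :
    Measurable fun z : ℕ → Matrix (Fin n) (Fin n) ℂ => ‖z k - z l‖ ^ 2 :=
  (((continuous_apply k).sub (continuous_apply l)).norm.pow 2).measurable

lemma measurable_chainEnergy (m : ℕ) :
    Measurable (chainEnergy m : (ℕ → Matrix (Fin n) (Fin n) ℂ) → ℝ) :=
  Finset.measurable_sum _ fun _ _ => measurable_norm_sub_sq _ _

lemma measurableSet_isFineChain (m : ℕ) (c : ℝ) :
    MeasurableSet {z : ℕ → Matrix (Fin n) (Fin n) ℂ | IsFineChain m c z} := by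
  simp only [IsFineChain, Set.ofPred_and, Set.ofPred_forall]
  refine MeasurableSet.inter ?_ ?_
  · exact MeasurableSet.iInter fun k => measurable_pi_apply k (measurableSet_UU n)
  · exact MeasurableSet.iInter fun k => MeasurableSet.iInter fun _ =>
      measurableSet_le (measurable_norm_sub_sq k (k + 1)) measurable_const

lemma IsFineChain.chainStep {m : ℕ} {c : ℝ} {z : ℕ → Matrix (Fin n) (Fin n) ℂ}
    (hz : IsFineChain m c z) {p : Fin n × Fin n} (hp : p ∈ pairs n)
    {u : Matrix (Fin 2) (Fin 2) ℂ} (hu : u ∈ UU 2) : IsFineChain m c (chainStep p z u) := by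
  refine ⟨chainStep_mem_UU hp hz.1 hu, fun k hk => ?_⟩
  rw [norm_chainStep_sub hp z hu]
  exact (norm_sub_embed2_rot_le (lt_of_mem_pairs hp).ne (hz.1 k) (hz.1 (k + 1))).trans (hz.2 k hk)

lemma IsFineChain.sum_chainEnergy_chainStep_le (hn : 2 ≤ n) {m : ℕ} {c : ℝ} (hc : c ≤ 2 / n)
    {z : ℕ → Matrix (Fin n) (Fin n) ℂ} (hz : IsFineChain m c z)
    {u : Matrix (Fin 2) (Fin 2) ℂ} (hu : u ∈ UU 2) :
    ∑ p ∈ pairs n, chainEnergy m (_root_.chainStep p z u) ≤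
      n.choose 2 * ((1 - 2 / n ^ 2) * chainEnergy m z) := by
  unfold chainEnergy
  rw [Finset.sum_comm, Finset.mul_sum, Finset.mul_sum]
  refine Finset.sum_le_sum fun k hk => ?_
  rw [Finset.sum_congr rfl fun p hp => by rw [norm_chainStep_sub hp z hu]]
  exact sum_pairs_norm_sub_embed2_rot_le hn (hz.1 k) (hz.1 (k + 1))
    ((hz.2 k (Finset.mem_range.mp hk)).trans hc)

lemma lintegral_chainEnergy_randomStep_le (hn : 2 ≤ n) {m : ℕ} {c : ℝ} (hc : c ≤ 2 / n)
    (η : Measure (ℕ → Matrix (Fin n) (Fin n) ℂ)) [IsProbabilityMeasure η]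
    (hη : ∀ᵐ z ∂η, IsFineChain m c z) :
    ∫⁻ z, ENNReal.ofReal (chainEnergy m z) ∂(randomStep n chainStep η) ≤
      ENNReal.ofReal (1 - 2 / n ^ 2) * ∫⁻ z, ENNReal.ofReal (chainEnergy m z) ∂η := by
  have hm : Measurable fun z : ℕ → Matrix (Fin n) (Fin n) ℂ => ENNReal.ofReal (chainEnergy m z) :=
    (measurable_chainEnergy m).ennreal_ofReal
  have hq : (0 : ℝ) ≤ 1 - 2 / n ^ 2 := by
    have : (2 : ℝ) ≤ n := by exact_mod_cast hn
    rw [sub_nonneg, div_le_one (by positivity)]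
    nlinarith
  rw [lintegral_randomStep measurable_chainStep hm]
  have hfst : ∀ᵐ q ∂(η.prod (haarLike (UU 2))), IsFineChain m c q.1 :=
    Measure.quasiMeasurePreserving_fst.ae hη
  have hsnd : ∀ᵐ q ∂(η.prod (haarLike (UU 2))), q.2 ∈ UU 2 :=
    Measure.quasiMeasurePreserving_snd.ae (ae_haarLike_mem_UU 2)
  have hle : ∫⁻ q, ∑ p ∈ pairs n, ENNReal.ofReal (chainEnergy m (chainStep p q.1 q.2))
        ∂(η.prod (haarLike (UU 2))) ≤
      ∫⁻ q, n.choose 2 * (ENNReal.ofReal (1 - 2 / n ^ 2) * ENNReal.ofReal (chainEnergy m q.1))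
        ∂(η.prod (haarLike (UU 2))) := by
    refine lintegral_mono_ae ?_
    filter_upwards [hfst, hsnd] with q hq1 hq2
    rw [← ENNReal.ofReal_sum_of_nonneg fun _ _ => chainEnergy_nonneg _ _,
      ← ENNReal.ofReal_mul hq, ← ENNReal.ofReal_natCast, ← ENNReal.ofReal_mul (by positivity)]
    exact ENNReal.ofReal_le_ofReal (hq1.sum_chainEnergy_chainStep_le hn hc hq2)
  refine (mul_le_mul_right hle _).trans_eq ?_
  have hm1 : Measurable fun q : (ℕ → Matrix (Fin n) (Fin n) ℂ) × Matrix (Fin 2) (Fin 2) ℂ =>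
      ENNReal.ofReal (chainEnergy m q.1) := hm.comp measurable_fst
  rw [lintegral_const_mul _ (hm1.const_mul _), lintegral_const_mul _ hm1, ← mul_assoc,
    ENNReal.inv_mul_cancel (choose_two_ne_zero hn) (by simp), one_mul,
    measurePreserving_fst.lintegral_comp hm]

/-- The law of a chain of walkers, all moving according to the walk, after `t` coupled steps. -/
lemma exists_coupled_chain (hn : 2 ≤ n) {m : ℕ} {c : ℝ} (hc : c ≤ 2 / n)
    (η : Measure (ℕ → Matrix (Fin n) (Fin n) ℂ)) [IsProbabilityMeasure η]
    (hη : ∀ᵐ z ∂η, IsFineChain m c z) (t : ℕ) :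
    ∃ η' : Measure (ℕ → Matrix (Fin n) (Fin n) ℂ), IsProbabilityMeasure η' ∧
      (∀ k, η'.map (fun z => z k) = kernelIterate (unitKernel n) t (η.map fun z => z k)) ∧
      (∀ᵐ z ∂η', IsFineChain m c z) ∧
      ∫⁻ z, ENNReal.ofReal (chainEnergy m z) ∂η' ≤
        ENNReal.ofReal (1 - 2 / n ^ 2) ^ t * ∫⁻ z, ENNReal.ofReal (chainEnergy m z) ∂η := by
  induction t with
  | zero => exact ⟨η, inferInstance, fun k => rfl, hη, by simp⟩
  | succ t ih =>
    obtain ⟨η', hprob, hmarg, hfine, hen⟩ := ih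
    refine ⟨randomStep n chainStep η',
      isProbabilityMeasure_randomStep hn measurable_chainStep η', fun k => ?_, ?_, ?_⟩
    · rw [map_randomStep measurable_chainStep (measurable_pi_apply k), kernelIterate, ← hmarg k]
      exact randomStep_embed2_mul (fun p => measurable_alignment p k)
        (fun p z => alignment_mem_UU p z k) (measurable_pi_apply k) η'
    · refine ae_randomStep measurable_chainStep (measurableSet_isFineChain m c) fun p hp => ?_
      have hfst : ∀ᵐ q ∂(η'.prod (haarLike (UU 2))), IsFineChain m c q.1 :=
        Measure.quasiMeasurePreserving_fst.ae hfine
      have hsnd : ∀ᵐ q ∂(η'.prod (haarLike (UU 2))), q.2 ∈ UU 2 :=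
        Measure.quasiMeasurePreserving_snd.ae (ae_haarLike_mem_UU 2)
      filter_upwards [hfst, hsnd] with q hq1 hq2
      exact hq1.chainStep hp hq2
    · refine (lintegral_chainEnergy_randomStep_le hn hc η' hfine).trans ?_
      rw [pow_succ' _ t, mul_assoc]
      gcongr

end CoupledChain

section InitialChain
open scoped Matrix.Norms.Frobenius

variable {n : ℕ}

/-- The chain from `q.1` to `q.2` (reached at time `m`) with intermediate points given by `w`. -/
def chainWithEnds (m : ℕ) (w : ℕ → Matrix (Fin n) (Fin n) ℂ)
    (q : Matrix (Fin n) (Fin n) ℂ × Matrix (Fin n) (Fin n) ℂ) (k : ℕ) :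
    Matrix (Fin n) (Fin n) ℂ :=
  if k = 0 then q.1 else if k < m then w k else q.2

lemma measurable_chainWithEnds (m : ℕ) (w : ℕ → Matrix (Fin n) (Fin n) ℂ) :
    Measurable (chainWithEnds m w) := by
  refine measurable_pi_iff.mpr fun k => ?_
  unfold chainWithEnds
  split_ifs
  exacts [measurable_fst, measurable_const, measurable_snd]

lemma continuous_chainWithEnds_left (m : ℕ)
    (q : Matrix (Fin n) (Fin n) ℂ × Matrix (Fin n) (Fin n) ℂ) (k : ℕ) :
    Continuous fun w : ℕ → UU n => chainWithEnds m (fun l => (w l : Matrix _ _ ℂ)) q k := by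
  unfold chainWithEnds
  split_ifs
  exacts [continuous_const, continuous_subtype_val.comp (continuous_apply k), continuous_const]

/-- Fine chains joining two given unitary matrices can be selected measurably. -/
lemma exists_measurable_isFineChain {m : ℕ} (hm : 0 < m) {c : ℝ}
    (hc : n * Real.pi ^ 2 / m ^ 2 < c) :
    ∃ Φ : Matrix (Fin n) (Fin n) ℂ × Matrix (Fin n) (Fin n) ℂ → ℕ → Matrix (Fin n) (Fin n) ℂ,
      Measurable Φ ∧ (∀ q, Φ q 0 = q.1) ∧ (∀ q, Φ q m = q.2) ∧
        ∀ q, q.1 ∈ UU n → q.2 ∈ UU n → IsFineChain m c (Φ q) := by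
  classical
  have : Nonempty (UU n) := ⟨⟨1, one_mem_UU n⟩⟩
  let d : ℕ → ℕ → UU n := TopologicalSpace.denseSeq (ℕ → UU n)
  let w : ℕ → ℕ → Matrix (Fin n) (Fin n) ℂ := fun j l => d j l
  let P : ℕ → Matrix (Fin n) (Fin n) ℂ × Matrix (Fin n) (Fin n) ℂ → Prop := fun j q =>
    q.1 ∈ UU n ∧ q.2 ∈ UU n →
      ∀ k < m, ‖chainWithEnds m (w j) q k - chainWithEnds m (w j) q (k + 1)‖ ^ 2 < c
  have hPmeas : ∀ j, MeasurableSet {q | P j q} := by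
    intro j
    have h1 : MeasurableSet {q : Matrix (Fin n) (Fin n) ℂ × Matrix (Fin n) (Fin n) ℂ |
        q.1 ∈ UU n ∧ q.2 ∈ UU n} :=
      (measurable_fst (measurableSet_UU n)).inter (measurable_snd (measurableSet_UU n))
    have h2 : MeasurableSet {q : Matrix (Fin n) (Fin n) ℂ × Matrix (Fin n) (Fin n) ℂ |
        ∀ k < m, ‖chainWithEnds m (w j) q k - chainWithEnds m (w j) q (k + 1)‖ ^ 2 < c} := by
      simp only [Set.ofPred_forall]
      exact MeasurableSet.iInter fun k => MeasurableSet.iInter fun _ =>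
        measurableSet_lt ((measurable_norm_sub_sq k (k + 1)).comp
          (measurable_chainWithEnds m (w j))) measurable_const
    exact h1.imp h2
  have hPex : ∀ q, ∃ j, P j q := by
    intro q
    by_cases hq : q.1 ∈ UU n ∧ q.2 ∈ UU n
    · obtain ⟨z, hz, hz0, hzm, hzd⟩ := exists_subdivision hq.1 hq.2 hm
      have hopen : IsOpen {v : ℕ → UU n | ∀ k < m,
          ‖chainWithEnds m (fun l => (v l : Matrix (Fin n) (Fin n) ℂ)) q k -
            chainWithEnds m (fun l => (v l : Matrix (Fin n) (Fin n) ℂ)) q (k + 1)‖ ^ 2 < c} := by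
        have h : ∀ k ∈ Finset.range m, IsOpen {v : ℕ → UU n |
            ‖chainWithEnds m (fun l => (v l : Matrix (Fin n) (Fin n) ℂ)) q k -
            chainWithEnds m (fun l => (v l : Matrix (Fin n) (Fin n) ℂ)) q (k + 1)‖ ^ 2 < c} :=
          fun k _ => isOpen_lt (((continuous_chainWithEnds_left m q k).sub
            (continuous_chainWithEnds_left m q (k + 1))).norm.pow 2) continuous_const
        convert isOpen_biInter_finset h using 1
        ext v
        simp
      have hz' : ∀ k ≤ m, chainWithEnds m z q k = z k := by
        intro k hk
        unfold chainWithEnds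
        split_ifs with h0 h1
        · rw [h0, hz0]
        · rfl
        · rw [show k = m by omega, hzm]
      obtain ⟨j, hj⟩ := (TopologicalSpace.denseRange_denseSeq (ℕ → UU n)).exists_mem_open hopen
        ⟨fun k => ⟨z k, hz k⟩, fun k hk => by
          simp only
          rw [hz' k hk.le, hz' (k + 1) hk]
          exact (hzd k).trans_lt hc⟩
      exact ⟨j, fun _ => hj⟩
    · exact ⟨0, fun h => absurd h hq⟩
  refine ⟨fun q => chainWithEnds m (w (Nat.find (hPex q))) q,
    Measurable.find (f := fun j q => chainWithEnds m (w j) q)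
      (fun j => measurable_chainWithEnds m (w j)) hPmeas hPex,
    fun q => by simp [chainWithEnds], fun q => by simp [chainWithEnds, hm.ne'],
    fun q h1 h2 => ⟨fun k => ?_, fun k hk => (Nat.find_spec (hPex q) ⟨h1, h2⟩ k hk).le⟩⟩
  simp only [chainWithEnds]
  split_ifs
  exacts [h1, (d _ k).2, h2]

end InitialChain

section MixingTime
open scoped Matrix.Norms.Frobenius

variable {n : ℕ}

lemma wassersteinE_sq_le (hn : 2 ≤ n) (μ : Measure (Matrix (Fin n) (Fin n) ℂ))
    [IsProbabilityMeasure μ] (hμ : μ (UU n)ᶜ = 0) (t : ℕ) {m : ℕ} (hm : 0 < m) {c : ℝ}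
    (hc : n * Real.pi ^ 2 / m ^ 2 < c) (hc2 : c ≤ 2 / n) :
    wassersteinE (DU n) 2 (kernelIterate (unitKernel n) t μ) (haarLike (UU n)) ≤
      ENNReal.ofReal (m / (1 - c / 4) ^ 2 * ((1 - 2 / n ^ 2) ^ t * (m * c))) ^ (1 / 2 : ℝ) := by
  have hn' : (2 : ℝ) ≤ n := by exact_mod_cast hn
  have hq : (0 : ℝ) ≤ 1 - 2 / n ^ 2 := by
    rw [sub_nonneg, div_le_one (by positivity)]
    nlinarith
  have hc4 : c < 4 := by
    have : 2 / (n : ℝ) ≤ 1 := by rw [div_le_one (by positivity)]; exact hn'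
    linarith
  have hc0 : 0 ≤ c := le_trans (by positivity) hc.le
  obtain ⟨Φ, hΦ, hΦ0, hΦm, hΦf⟩ := exists_measurable_isFineChain hm hc
  let η₀ := (μ.prod (haarLike (UU n))).map Φ
  have hη₀ : IsProbabilityMeasure η₀ := Measure.isProbabilityMeasure_map hΦ.aemeasurable
  have hfine₀ : ∀ᵐ z ∂η₀, IsFineChain m c z := by
    rw [ae_map_iff hΦ.aemeasurable (measurableSet_isFineChain m c)]
    have h1 : ∀ᵐ q ∂(μ.prod (haarLike (UU n))), q.1 ∈ UU n :=
      Measure.quasiMeasurePreserving_fst.ae hμ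
    have h2 : ∀ᵐ q ∂(μ.prod (haarLike (UU n))), q.2 ∈ UU n :=
      Measure.quasiMeasurePreserving_snd.ae (ae_haarLike_mem_UU n)
    filter_upwards [h1, h2] with q hq1 hq2 using hΦf q hq1 hq2
  have hmarg0 : η₀.map (fun z => z 0) = μ := by
    rw [Measure.map_map (measurable_pi_apply 0) hΦ]
    exact (congrArg (Measure.map · _) (funext hΦ0)).trans measurePreserving_fst.map_eq
  have hmargm : η₀.map (fun z => z m) = haarLike (UU n) := by
    rw [Measure.map_map (measurable_pi_apply m) hΦ]
    exact (congrArg (Measure.map · _) (funext hΦm)).trans measurePreserving_snd.map_eq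
  obtain ⟨η, hη, hmarg, hfine, hen⟩ := exists_coupled_chain hn hc2 η₀ hfine₀ t
  have hen₀ : ∫⁻ z, ENNReal.ofReal (chainEnergy m z) ∂η₀ ≤ ENNReal.ofReal (m * c) := by
    refine (lintegral_mono_ae (g := fun _ => ENNReal.ofReal (m * c)) ?_).trans (by simp)
    filter_upwards [hfine₀] with z hz
    refine ENNReal.ofReal_le_ofReal ((Finset.sum_le_sum fun k hk =>
      hz.2 k (Finset.mem_range.mp hk)).trans (by simp))
  have hends : Measurable fun z : ℕ → Matrix (Fin n) (Fin n) ℂ => (z 0, z m) :=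
    (measurable_pi_apply 0).prodMk (measurable_pi_apply m)
  have hcoup : IsCoupling (η.map fun z => (z 0, z m))
      (kernelIterate (unitKernel n) t μ) (haarLike (UU n)) := by
    constructor
    · rw [Measure.map_map measurable_fst hends]
      exact (hmarg 0).trans (by rw [hmarg0])
    · rw [Measure.map_map measurable_snd hends]
      exact (hmarg m).trans (by rw [hmargm, kernelIterate_haarLike hn])
  refine iInf_le_of_le _ (iInf_le_of_le hcoup (ENNReal.rpow_le_rpow ?_ one_half_pos.le))
  calc ∫⁻ q, DU n q.1 q.2 ^ (2 : ℝ) ∂(η.map fun z => (z 0, z m))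
      ≤ ∫⁻ z, DU n (z 0) (z m) ^ (2 : ℝ) ∂η := lintegral_map_le _ _
    _ ≤ ∫⁻ z, ENNReal.ofReal (m / (1 - c / 4) ^ 2) * ENNReal.ofReal (chainEnergy m z) ∂η := by
      refine lintegral_mono_ae ?_
      filter_upwards [hfine] with z hz
      exact DU_sq_le_chain hz.1 hc4 m hz.2
    _ = ENNReal.ofReal (m / (1 - c / 4) ^ 2) * ∫⁻ z, ENNReal.ofReal (chainEnergy m z) ∂η :=
      lintegral_const_mul _ (measurable_chainEnergy m).ennreal_ofReal
    _ ≤ ENNReal.ofReal (m / (1 - c / 4) ^ 2) *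
        (ENNReal.ofReal (1 - 2 / n ^ 2) ^ t * ENNReal.ofReal (m * c)) := by
      gcongr
      exact hen.trans (by gcongr)
    _ = _ := by
      rw [← ENNReal.ofReal_pow hq, ← ENNReal.ofReal_mul (pow_nonneg hq t),
        ← ENNReal.ofReal_mul (by positivity)]

lemma contraction_pow_le (hn : 2 ≤ n) {ε : ℝ} (hε : 0 < ε) {t : ℕ}
    (ht : (n : ℝ) ^ 2 * Real.log (Real.pi * Real.sqrt n / ε) ≤ (t : ℝ)) :
    n * Real.pi ^ 2 * (1 - 2 / n ^ 2) ^ t ≤ ε ^ 2 := by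
  have hn' : (2 : ℝ) ≤ n := by exact_mod_cast hn
  have hq : (0 : ℝ) ≤ 1 - 2 / n ^ 2 := by
    rw [sub_nonneg, div_le_one (by positivity)]
    nlinarith
  have hn2 : (0 : ℝ) < n ^ 2 := by positivity
  have hpos : 0 < Real.pi * Real.sqrt n / ε := by positivity
  set r := Real.pi * Real.sqrt n / ε with hr
  have hr2 : n * Real.pi ^ 2 = ε ^ 2 * r ^ 2 := by
    rw [hr, div_pow, mul_pow, Real.sq_sqrt (by positivity)]
    field_simp
  have h1 : (1 - 2 / (n : ℝ) ^ 2) ^ t ≤ Real.exp (-(2 / n ^ 2) * t) := by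
    calc (1 - 2 / (n : ℝ) ^ 2) ^ t ≤ Real.exp (-(2 / n ^ 2)) ^ t := by
          gcongr
          linarith [Real.add_one_le_exp (-(2 / (n : ℝ) ^ 2))]
      _ = _ := by rw [← Real.exp_nat_mul, mul_comm]
  have h2 : Real.exp (-(2 / n ^ 2) * t) ≤ (r ^ 2)⁻¹ := by
    rw [← Real.exp_log (show (0 : ℝ) < (r ^ 2)⁻¹ by positivity), Real.exp_le_exp, Real.log_inv,
      Real.log_pow]
    have : Real.log r ≤ t / n ^ 2 := by rw [le_div_iff₀ hn2]; linarith
    have h3 : (2 / (n : ℝ) ^ 2) * t = 2 * (t / n ^ 2) := by ring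
    push_cast
    linarith
  rw [hr2, mul_assoc]
  calc ε ^ 2 * (r ^ 2 * (1 - 2 / n ^ 2) ^ t) ≤ ε ^ 2 * (r ^ 2 * (r ^ 2)⁻¹) := by
        gcongr
        exact h1.trans h2
    _ = ε ^ 2 := by rw [mul_inv_cancel₀ (by positivity), mul_one]

end MixingTime

/-- **Theorem 5.** For every `n ≥ 2` and `ε > 0`, the random walk `L` on `U(n)` (each step
applies a Haar-random element of `U(2)` to the span of a uniformly chosen pair of
coordinate vectors) satisfies `τ_{D,2}(ε) ≤ ⌈n² ln(π√n/ε)⌉`: for every probability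
measure `μ` on `U(n)` and every integer `t ≥ n² ln(π√n/ε)`, the time-`t` distribution is
within `ε` of the Haar measure of `U(n)` in `L²` transportation cost for the intrinsic
metric `D`. -/
theorem unitary_walk_mixing_time (n : ℕ) (hn : 2 ≤ n) (ε : ℝ) (hε : 0 < ε)
    (μ : Measure (Matrix (Fin n) (Fin n) ℂ)) (hμprob : IsProbabilityMeasure μ)
    (hμU : μ (UU n)ᶜ = 0) (t : ℕ)
    (ht : (n : ℝ) ^ 2 * Real.log (Real.pi * Real.sqrt n / ε) ≤ (t : ℝ)) :
    wassersteinE (DU n) 2 (kernelIterate (unitKernel n) t μ) (haarLike (UU n)) ≤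
      ENNReal.ofReal ε := by
  have hinv : Tendsto (fun m : ℕ => (m : ℝ)⁻¹) atTop (𝓝 0) := tendsto_inv_atTop_nhds_zero_nat
  let c : ℕ → ℝ := fun m => (n * Real.pi ^ 2 + (m : ℝ)⁻¹) * (m : ℝ)⁻¹ ^ 2
  have hlim_c : Tendsto c atTop (𝓝 0) := by
    simpa [c] using (hinv.const_add (n * Real.pi ^ 2)).mul (hinv.pow 2)
  have hlim : Tendsto (fun m : ℕ => ((n * Real.pi ^ 2 + (m : ℝ)⁻¹) * (1 - 2 / n ^ 2) ^ t) /
      (1 - c m / 4) ^ 2) atTop (𝓝 (n * Real.pi ^ 2 * (1 - 2 / n ^ 2) ^ t)) := by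
    have h := ((hinv.const_add (n * Real.pi ^ 2)).mul_const ((1 - 2 / (n : ℝ) ^ 2) ^ t)).div
      (((hlim_c.div_const 4).const_sub 1).pow 2) (by norm_num)
    simp only [zero_div, sub_zero, one_pow, add_zero, div_one] at h
    exact h
  have hn0 : (0 : ℝ) < 2 / n := by positivity
  have hsqrt : ENNReal.ofReal ε = ENNReal.ofReal (ε ^ 2) ^ (1 / 2 : ℝ) := by
    rw [ENNReal.ofReal_rpow_of_nonneg (by positivity) (by norm_num), ← Real.sqrt_eq_rpow,
      Real.sqrt_sq hε.le]
  rw [hsqrt]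
  refine le_trans ?_ (ENNReal.rpow_le_rpow
    (ENNReal.ofReal_le_ofReal (contraction_pow_le hn hε ht)) (by norm_num))
  refine ge_of_tendsto ((ENNReal.continuous_rpow_const.tendsto _).comp
    (ENNReal.tendsto_ofReal hlim)) ?_
  filter_upwards [hlim_c.eventually_le_const hn0, eventually_gt_atTop 0] with m hcm hm
  have hm' : (0 : ℝ) < m := by exact_mod_cast hm
  have hc : n * Real.pi ^ 2 / m ^ 2 < c m := by
    simp only [c]
    rw [div_eq_mul_inv, ← inv_pow]
    gcongr
    simpa using hm'
  refine (wassersteinE_sq_le hn μ hμU t hm hc hcm).trans_eq ?_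
  simp only [Function.comp_apply]
  congr 2
  simp only [c]
  field_simp

end
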